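/- arXiv:2412.20001 — 3 statements merged into one kernel-verified Lean document; each statement's English description precedes it below -/
import Mathlib

section
/- For all n ≥ k ≥ 1, χ_b(KS(n,k)) ≥ n−k+1. -/
/-- A signed `k`-subset of `[n]`: a `k`-subset `A` of `{±1,…,±n}` with `A ∩ (−A) = ∅`. -/
def IsSignedKSubset (n k : ℕ) (A : Finset ℤ) : Prop :=
  A.card = k ∧ (∀ a ∈ A, a ≠ 0 ∧ a.natAbs ≤ n) ∧ ∀ a ∈ A, -a ∉ A

/-- A set of nonzero integers is alternating if any two of its elements that are consecutive
in absolute value have opposite signs. -/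
def IsAlternating (A : Finset ℤ) : Prop :=
  ∀ a ∈ A, ∀ b ∈ A, a.natAbs < b.natAbs →
    (∀ c ∈ A, ¬(a.natAbs < c.natAbs ∧ c.natAbs < b.natAbs)) → (0 < a ↔ b < 0)

/-- The element of smallest absolute value is positive. -/
def FirstPos (A : Finset ℤ) : Prop :=
  ∀ a ∈ A, (∀ b ∈ A, a.natAbs ≤ b.natAbs) → 0 < a

/-- Positive adjacency in the signed Kneser graph: `A ∩ (−B) = ∅`. -/
def ksPos (A B : Finset ℤ) : Prop := ∀ a ∈ A, -a ∉ B

/-- Negative adjacency in the signed Kneser graph: `A ∩ B = ∅`. -/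
def ksNeg (A B : Finset ℤ) : Prop := Disjoint A B

/-- The vertices of the signed Kneser graph `KS(n,k)`. -/
def KSVertex (n k : ℕ) : Type := {A : Finset ℤ // IsSignedKSubset n k A}

/-- A set `S` of vertices of a signed graph is balanced if some switching makes all edges
inside `S` positive. -/
def IsBalancedSet {V : Type*} (pos neg : V → V → Prop) (S : Set V) : Prop :=
  ∃ X : Set V, ∀ u ∈ S, ∀ v ∈ S,
    (pos u v → ((u ∈ X) ↔ (v ∈ X))) ∧ (neg u v → ¬((u ∈ X) ↔ (v ∈ X)))

/-- The balanced chromatic number: the least `p` such that the vertex set can be partitioned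
into `p` balanced sets. -/
noncomputable def balancedChromatic {V : Type*} (pos neg : V → V → Prop) : ℕ :=
  sInf {p : ℕ | ∃ f : V → Fin p, ∀ i : Fin p, IsBalancedSet pos neg (f ⁻¹' {i})}


/-- Alternation indicator (mod 2). -/
def altA {ι α : Type*} [LinearOrder α] (κ : ι → α) (s : Finset ι) (g : ι → ZMod 2) : ZMod 2 :=
  ∏ i ∈ s, (g i + ((s.filter (fun j => κ j < κ i)).card : ZMod 2))

theorem z2_add_self (a : ZMod 2) : a + a = 0 := by revert a; decide

theorem altA_key {ι α : Type*} [LinearOrder α] [DecidableEq ι] (κ : ι → α)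
    (hκ : Function.Injective κ) (s : Finset ι) (g : ι → ZMod 2) :
    ∑ i ∈ s, altA κ (s.erase i) g = altA κ s g + altA κ s (fun i => g i + 1) := by
  classical
  have h := @Finset.prod_add_ordered ι (ZMod 2) _ (LinearOrder.lift' κ hκ) s
    (fun i => g i + 1 + ((s.filter (fun j => κ j < κ i)).card : ZMod 2)) (fun _ => 1)
  have e1 : altA κ s g = ∏ i ∈ s,
      (g i + 1 + ((s.filter (fun j => κ j < κ i)).card : ZMod 2) + 1) := by
    unfold altA
    refine Finset.prod_congr rfl fun i _ => ?_
    linear_combination -(z2_add_self 1)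
  have e2 : ∑ i ∈ s, altA κ (s.erase i) g = ∑ i ∈ s,
      ((∏ j ∈ s with κ j < κ i,
        (g j + 1 + ((s.filter (fun l => κ l < κ j)).card : ZMod 2) + 1)) *
       (∏ j ∈ s with κ i < κ j,
        (g j + 1 + ((s.filter (fun l => κ l < κ j)).card : ZMod 2)))) := by
    refine Finset.sum_congr rfl fun i hi => ?_
    have hs : s.erase i = (s.filter (fun j => κ j < κ i)) ∪ (s.filter (fun j => κ i < κ j)) := by
      ext j
      simp only [Finset.mem_erase, Finset.mem_union, Finset.mem_filter]
      constructor
      · rintro ⟨h1, h2⟩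
        rcases lt_or_gt_of_ne (fun h => h1 (hκ h)) with h | h
        · exact Or.inl ⟨h2, h⟩
        · exact Or.inr ⟨h2, h⟩
      · rintro (⟨h1, h2⟩ | ⟨h1, h2⟩)
        · exact ⟨fun h => by simp [h] at h2, h1⟩
        · exact ⟨fun h => by simp [h] at h2, h1⟩
    have hd : Disjoint (s.filter (fun j => κ j < κ i)) (s.filter (fun j => κ i < κ j)) := by
      rw [Finset.disjoint_filter]
      intro j _ h1 h2
      exact lt_asymm h1 h2
    have hp : altA κ (s.erase i) g = ∏ j ∈ s.erase i,
      (g j + (((s.filter (fun l => κ l < κ j)).erase i).card : ZMod 2)) := by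
      unfold altA
      refine Finset.prod_congr rfl fun j _ => ?_
      rw [Finset.filter_erase]
    rw [hp, hs, Finset.prod_union hd]
    congr 1
    · refine Finset.prod_congr rfl fun j hj => ?_
      have hj2 := (Finset.mem_filter.1 hj).2
      rw [Finset.erase_eq_of_notMem]
      · linear_combination -(z2_add_self 1)
      · simp [hj2.le]
    · refine Finset.prod_congr rfl fun j hj => ?_
      have hj2 := (Finset.mem_filter.1 hj).2
      have hm : i ∈ s.filter (fun l => κ l < κ j) := by simp [hi, hj2]
      have := Finset.card_erase_add_one hm
      rw [← this]
      push_cast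
      linear_combination -(z2_add_self 1)
  have h' : altA κ s g = altA κ s (fun i => g i + 1) + ∑ i ∈ s, altA κ (s.erase i) g := by
    rw [e1, e2]
    refine h.trans ?_
    unfold altA
    congr 1
    refine Finset.sum_congr rfl fun i _ => ?_
    rw [one_mul]
    congr 1
  rw [h']
  linear_combination -z2_add_self (altA κ s (fun i => g i + 1))

/-- Order key of labels. -/
def kap {n : ℕ} (l : Fin n → ℤ) (i : Fin n) : ℕ ×ₗ ℕ := toLex ((l i).natAbs, (i : ℕ))

theorem kap_inj {n : ℕ} (l : Fin n → ℤ) : Function.Injective (kap l) := by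
  intro i j h
  have h2 : ((l i).natAbs, (i : ℕ)) = ((l j).natAbs, (j : ℕ)) := toLex.injective h
  exact Fin.ext (Prod.mk.inj h2).2

/-- Sign bit. -/
def sgb {n : ℕ} (l : Fin n → ℤ) (i : Fin n) : ZMod 2 := if 0 < l i then 1 else 0

/-- Positive alternation indicator of labels. -/
def PA {n : ℕ} (s : Finset (Fin n)) (l : Fin n → ℤ) : ZMod 2 := altA (kap l) s (sgb l)

theorem PA_congr {n : ℕ} (s : Finset (Fin n)) (l l' : Fin n → ℤ) (h : ∀ i ∈ s, l i = l' i) :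
    PA s l = PA s l' := by
  unfold PA altA
  refine Finset.prod_congr rfl fun i hi => ?_
  have : s.filter (fun j => kap l j < kap l i) = s.filter (fun j => kap l' j < kap l' i) := by
    refine Finset.filter_congr fun j hj => ?_
    simp only [kap, h i hi, h j hj]
  rw [this]
  simp only [sgb, h i hi]

theorem PA_neg {n : ℕ} (s : Finset (Fin n)) (l l' : Fin n → ℤ) (h0 : ∀ i ∈ s, l i ≠ 0)
    (h : ∀ i ∈ s, l' i = - l i) :
    PA s l' = altA (kap l) s (fun i => sgb l i + 1) := by
  unfold PA altA
  refine Finset.prod_congr rfl fun i hi => ?_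
  have : s.filter (fun j => kap l' j < kap l' i) = s.filter (fun j => kap l j < kap l i) := by
    refine Finset.filter_congr fun j hj => ?_
    simp only [kap, h i hi, h j hj, Int.natAbs_neg]
  rw [this]
  congr 1
  simp only [sgb, h i hi]
  have := h0 i hi
  by_cases hp : 0 < l i
  · rw [if_neg (by omega), if_pos hp]; decide
  · rw [if_pos (by omega), if_neg hp]; decide

theorem PA_facets {n : ℕ} (s : Finset (Fin n)) (l l' : Fin n → ℤ) (h0 : ∀ i ∈ s, l i ≠ 0)
    (h : ∀ i ∈ s, l' i = - l i) :
    PA s l + PA s l' = ∑ i ∈ s, PA (s.erase i) l := by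
  rw [PA_neg s l l' h0 h]
  exact (altA_key (kap l) (kap_inj l) s (sgb l)).symm

/-- Signed permutations, encoding full flags. -/
abbrev SFlag (n : ℕ) : Type := Equiv.Perm (Fin n) × (Fin n → Bool)

/-- The j-th signed entry. -/
def ent {n : ℕ} (p : SFlag n) (j : Fin n) : ℤ :=
  if p.2 (p.1 j) then ((p.1 j : ℕ) : ℤ) + 1 else -(((p.1 j : ℕ) : ℤ) + 1)

/-- The i-th member of the flag. -/
def xs {n : ℕ} (p : SFlag n) (i : Fin n) : Finset ℤ :=
  (Finset.univ.filter (fun j => j ≤ i)).image (ent p)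

/-- Nonempty signed subset. -/
def Valid (n : ℕ) (S : Finset ℤ) : Prop :=
  S.Nonempty ∧ (∀ a ∈ S, a ≠ 0 ∧ a.natAbs ≤ n) ∧ ∀ a ∈ S, -a ∉ S

/-- Negation of a set. -/
def ng (S : Finset ℤ) : Finset ℤ := S.image (fun a => -a)

theorem mem_ng (S : Finset ℤ) (a : ℤ) : a ∈ ng S ↔ -a ∈ S := by
  unfold ng
  rw [Finset.mem_image]
  constructor
  · rintro ⟨b, hb, rfl⟩; simpa using hb
  · intro h; exact ⟨-a, h, by simp⟩

theorem xs_valid {n : ℕ} (p : SFlag n) (i : Fin n) : Valid n (xs p i) := by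
  refine ⟨⟨ent p i, ?_⟩, ?_, ?_⟩
  · unfold xs; exact Finset.mem_image_of_mem _ (by simp)
  · intro a ha
    obtain ⟨j, _, rfl⟩ := Finset.mem_image.1 ha
    have := (p.1 j).2
    unfold ent
    split_ifs <;> constructor <;> omega
  · intro a ha hb
    obtain ⟨j, _, rfl⟩ := Finset.mem_image.1 ha
    obtain ⟨j', _, h⟩ := Finset.mem_image.1 hb
    have hj : p.1 j' = p.1 j := by
      apply Fin.ext
      unfold ent at h
      split_ifs at h <;> omega
    unfold ent at h
    rw [hj] at h
    split_ifs at h <;> omega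

theorem xs_mono {n : ℕ} (p : SFlag n) {i j : Fin n} (h : i ≤ j) : xs p i ⊆ xs p j := by
  unfold xs
  refine Finset.image_subset_image ?_
  intro a ha
  simp only [Finset.mem_filter, Finset.mem_univ, true_and] at ha ⊢
  exact ha.trans h

/-- flags of the d-th subsphere -/
def GG (n d : ℕ) : Finset (SFlag n) :=
  Finset.univ.filter (fun p => ∀ j : Fin n, d ≤ (j : ℕ) → p.1 j = j ∧ p.2 j = true)

theorem mem_GG {n d : ℕ} (p : SFlag n) :
    p ∈ GG n d ↔ ∀ j : Fin n, d ≤ (j : ℕ) → p.1 j = j ∧ p.2 j = true := by simp [GG]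

/-- initial index sets -/
def II (n d : ℕ) : Finset (Fin n) := Finset.univ.filter (fun j => (j : ℕ) < d)

theorem mem_II {n d : ℕ} (j : Fin n) : j ∈ II n d ↔ (j : ℕ) < d := by simp [II]

/-- antipode on low coordinates -/
def nu {n : ℕ} (d : ℕ) (p : SFlag n) : SFlag n :=
  (p.1, fun j => if (j : ℕ) < d then !(p.2 j) else p.2 j)

theorem nu_nu {n : ℕ} (d : ℕ) (p : SFlag n) : nu d (nu d p) = p := by
  unfold nu
  refine Prod.ext rfl ?_
  funext j
  dsimp only
  split_ifs <;> simp

theorem nu_mem {n d : ℕ} {p : SFlag n} (h : p ∈ GG n d) : nu d p ∈ GG n d := by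
  rw [mem_GG] at h ⊢
  intro j hj
  refine ⟨(h j hj).1, ?_⟩
  simp only [nu]
  rw [if_neg (by omega)]
  exact (h j hj).2

theorem GG_low {n d : ℕ} {p : SFlag n} (h : p ∈ GG n d) {j : Fin n} (hj : (j : ℕ) < d) :
    (p.1 j : ℕ) < d := by
  by_contra hc
  have h1 := ((mem_GG p).1 h (p.1 j) (by omega)).1
  have h2 := p.1.injective h1
  rw [h2] at hc
  omega

theorem xs_nu {n d : ℕ} {p : SFlag n} (h : p ∈ GG n d) {i : Fin n} (hi : (i : ℕ) < d) :
    xs (nu d p) i = ng (xs p i) := by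
  unfold xs ng
  rw [Finset.image_image]
  refine Finset.image_congr ?_
  intro j hj
  simp only [Finset.coe_filter, Finset.mem_univ, true_and, Set.mem_ofPred_eq] at hj
  have hj' : (j : ℕ) < d := lt_of_le_of_lt hj hi
  have h2 := GG_low h hj'
  have h3 : (nu d p).2 (p.1 j) = !(p.2 (p.1 j)) := if_pos h2
  have h4 : (nu d p).1 j = p.1 j := rfl
  unfold ent
  simp only [Function.comp, h4, h3]
  cases p.2 (p.1 j) <;> simp

/-- swapping two adjacent positions -/
def sw {n : ℕ} (i i' : Fin n) (p : SFlag n) : SFlag n := (p.1 * Equiv.swap i i', p.2)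

theorem xs_sw {n : ℕ} (i i' k : Fin n) (hi : (i' : ℕ) = i + 1) (hk : k ≠ i) (p : SFlag n) :
    xs (sw i i' p) k = xs p k := by
  have hent : ∀ j, ent (sw i i' p) j = ent p (Equiv.swap i i' j) := fun j => rfl
  have hkk : (k : ℕ) ≠ i := fun h => hk (Fin.ext h)
  have hstab : ∀ j : Fin n, j ≤ k → Equiv.swap i i' j ≤ k := by
    intro j hj
    rw [Equiv.swap_apply_def]
    rw [Fin.le_def] at *
    split_ifs with h1 h2
    · rw [h1] at hj; omega
    · rw [h2] at hj; omega
    · exact hj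
  ext a
  simp only [xs, Finset.mem_image, Finset.mem_filter, Finset.mem_univ, true_and, hent]
  constructor
  · rintro ⟨j, hj, rfl⟩; exact ⟨_, hstab j hj, rfl⟩
  · rintro ⟨j, hj, rfl⟩; exact ⟨_, hstab j hj, by simp⟩

/-- flipping the last sign -/
def fl {n : ℕ} (i : Fin n) (p : SFlag n) : SFlag n :=
  (p.1, fun j => if j = p.1 i then !(p.2 j) else p.2 j)

theorem xs_fl {n : ℕ} (i k : Fin n) (hk : k < i) (p : SFlag n) :
    xs (fl i p) k = xs p k := by
  unfold xs
  refine Finset.image_congr ?_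
  intro j hj
  simp only [Finset.coe_filter, Finset.mem_univ, true_and, Set.mem_ofPred_eq] at hj
  have : p.1 j ≠ p.1 i := fun h => by
    have := p.1.injective h
    rw [this] at hj
    exact absurd hk (not_lt.2 hj)
  have h3 : (fl i p).2 (p.1 j) = p.2 (p.1 j) := if_neg this
  have h4 : (fl i p).1 j = p.1 j := rfl
  unfold ent
  simp only [h3, h4]

theorem fl_fl {n : ℕ} (i : Fin n) (p : SFlag n) : fl i (fl i p) = p := by
  unfold fl
  refine Prod.ext rfl ?_
  funext j
  dsimp only
  split_ifs <;> simp

/-- hemisphere -/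
def UU (n d : ℕ) (e : Fin n) : Finset (SFlag n) := (GG n d).filter (fun p => p.2 e = true)

theorem tucker_step {n : ℕ} (lam : Finset ℤ → ℤ)
    (h0 : ∀ S, Valid n S → lam S ≠ 0)
    (hneg : ∀ S, Valid n S → lam (ng S) = - lam S) (d : ℕ) (hd : d < n) :
    ∑ p ∈ GG n (d + 1), PA (II n (d + 1)) (fun i => lam (xs p i)) =
      ∑ p ∈ GG n d, PA (II n d) (fun i => lam (xs p i)) := by
  classical
  set e : Fin n := ⟨d, hd⟩ with he
  -- split in hemispheres
  have h1 : ∑ p ∈ GG n (d + 1), PA (II n (d + 1)) (fun i => lam (xs p i)) =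
      ∑ p ∈ UU n (d + 1) e, (PA (II n (d + 1)) (fun i => lam (xs p i)) +
        PA (II n (d + 1)) (fun i => lam (xs (nu (d + 1) p) i))) := by
    rw [Finset.sum_add_distrib,
      ← Finset.sum_filter_add_sum_filter_not (GG n (d + 1)) (fun p => p.2 e = true)]
    congr 1
    refine Finset.sum_bij' (fun p _ => nu (d + 1) p) (fun p _ => nu (d + 1) p) ?_ ?_ ?_ ?_ ?_
    · intro p hp
      rw [Finset.mem_filter] at hp
      refine Finset.mem_filter.2 ⟨nu_mem hp.1, ?_⟩
      simp only [nu]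
      rw [if_pos (by simp [he])]
      simpa using hp.2
    · intro p hp
      unfold UU at hp
      rw [Finset.mem_filter] at hp
      refine Finset.mem_filter.2 ⟨nu_mem hp.1, ?_⟩
      simp only [nu]
      rw [if_pos (by simp [he])]
      simpa using hp.2
    · intro p _; exact nu_nu _ _
    · intro p _; exact nu_nu _ _
    · intro p _; simp only [nu_nu]
  have h2 : ∀ p ∈ UU n (d + 1) e, (PA (II n (d + 1)) (fun i => lam (xs p i)) +
        PA (II n (d + 1)) (fun i => lam (xs (nu (d + 1) p) i))) =
      ∑ i ∈ II n (d + 1), PA ((II n (d + 1)).erase i) (fun i => lam (xs p i)) := by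
    intro p hp
    have hp := (Finset.mem_filter.1 hp).1
    refine PA_facets _ _ _ (fun i _ => h0 _ (xs_valid p i)) ?_
    intro i hi
    rw [mem_II] at hi
    rw [xs_nu hp hi, hneg _ (xs_valid p i)]
  rw [h1, Finset.sum_congr rfl h2, Finset.sum_comm]
  have heI : e ∈ II n (d + 1) := by rw [mem_II]; simp [he]
  rw [← Finset.sum_erase_add _ _ heI]
  have hz : ∑ i ∈ (II n (d + 1)).erase e, ∑ p ∈ UU n (d + 1) e,
      PA ((II n (d + 1)).erase i) (fun i => lam (xs p i)) = 0 := by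
    refine Finset.sum_eq_zero fun i hi => ?_
    rw [Finset.mem_erase, mem_II] at hi
    have hid : (i : ℕ) < d := by
      have : (i : ℕ) ≠ d := fun h => hi.1 (Fin.ext h)
      omega
    set i' : Fin n := ⟨i + 1, by omega⟩ with hi'
    have hne : i ≠ i' := fun h => by
      have := congrArg Fin.val h
      simp [hi'] at this
    refine Finset.sum_involution (fun p _ => sw i i' p) ?_ ?_ ?_ ?_
    · intro p _
      rw [PA_congr _ (fun k => lam (xs (sw i i' p) k)) (fun k => lam (xs p k))]
      · exact z2_add_self _
      · intro k hk
        rw [xs_sw i i' k rfl (Finset.mem_erase.1 hk).1]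
    · intro p _ _ h
      have h3 := congrArg (fun q : SFlag n => q.1 i) h
      simp only [sw, Equiv.Perm.mul_apply, Equiv.swap_apply_left] at h3
      exact hne (p.1.injective h3).symm
    · intro p hp
      unfold UU at hp ⊢
      rw [Finset.mem_filter, mem_GG] at hp ⊢
      refine ⟨fun j hj => ⟨?_, (hp.1 j hj).2⟩, hp.2⟩
      simp only [sw, Equiv.Perm.mul_apply]
      rw [Equiv.swap_apply_of_ne_of_ne, (hp.1 j hj).1]
      · rintro rfl; omega
      · rintro rfl; simp [hi'] at hj; omega
    · intro p _
      simp [sw, mul_assoc]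
  rw [hz, zero_add]
  have hII : (II n (d + 1)).erase e = II n d := by
    ext j
    rw [Finset.mem_erase, mem_II, mem_II]
    have : j ≠ e ↔ (j : ℕ) ≠ d := by rw [he, Ne, Fin.ext_iff]
    rw [this]; omega
  rw [hII, ← Finset.sum_filter_add_sum_filter_not (UU n (d + 1) e) (fun p => p.1 e = e)]
  have hz2 : ∑ p ∈ (UU n (d + 1) e).filter (fun p => ¬ p.1 e = e),
      PA (II n d) (fun i => lam (xs p i)) = 0 := by
    refine Finset.sum_involution (fun p _ => fl e p) ?_ ?_ ?_ ?_
    · intro p _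
      rw [PA_congr _ (fun k => lam (xs (fl e p) k)) (fun k => lam (xs p k))]
      · exact z2_add_self _
      · intro k hk
        rw [xs_fl e k]
        rw [mem_II] at hk
        exact hk
    · intro p _ _ h
      have h3 := congrArg (fun q : SFlag n => q.2 (p.1 e)) h
      simp [fl] at h3
    · intro p hp
      unfold UU at hp ⊢
      rw [Finset.mem_filter, Finset.mem_filter, mem_GG] at hp ⊢
      obtain ⟨⟨ha, hb⟩, hc⟩ := hp
      refine ⟨⟨fun j hj => ⟨(ha j hj).1, ?_⟩, ?_⟩, hc⟩
      · simp only [fl]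
        rw [if_neg, (ha j hj).2]
        intro h
        have h5 := (ha j hj).1
        have := p.1.injective (h5.trans h)
        rw [this] at hj
        simp [he] at hj
      · simp only [fl]
        rw [if_neg (fun h => hc h.symm), hb]
    · intro p _; exact fl_fl e p
  rw [hz2, add_zero]
  refine Finset.sum_congr ?_ (fun _ _ => rfl)
  ext p
  unfold UU
  rw [Finset.mem_filter, Finset.mem_filter, mem_GG, mem_GG]
  constructor
  · rintro ⟨⟨ha, hb⟩, hc⟩ j hj
    by_cases h : (j : ℕ) = d
    · have : j = e := Fin.ext h
      subst this; exact ⟨hc, hb⟩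
    · exact ha j (by omega)
  · intro h
    exact ⟨⟨fun j hj => h j (by omega), (h e (by simp [he])).2⟩, (h e (by simp [he])).1⟩

theorem tucker_sum {n : ℕ} (lam : Finset ℤ → ℤ)
    (h0 : ∀ S, Valid n S → lam S ≠ 0)
    (hneg : ∀ S, Valid n S → lam (ng S) = - lam S) (d : ℕ) (hd : d ≤ n) :
    ∑ p ∈ GG n d, PA (II n d) (fun i => lam (xs p i)) = 1 := by
  induction d with
  | zero =>
    have : GG n 0 = {(1, fun _ => true)} := by
      ext p
      rw [mem_GG, Finset.mem_singleton]
      constructor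
      · intro h
        refine Prod.ext ?_ ?_
        · ext j; simp [(h j (Nat.zero_le _)).1]
        · funext j; exact (h j (Nat.zero_le _)).2
      · rintro rfl j _; simp
    rw [this, Finset.sum_singleton]
    simp [PA, altA, II]
  | succ d ih => rw [tucker_step lam h0 hneg d (by omega)]; exact ih (by omega)

theorem tucker {n m : ℕ} (lam : Finset ℤ → ℤ)
    (h0 : ∀ S, Valid n S → lam S ≠ 0)
    (hm : ∀ S, Valid n S → (lam S).natAbs ≤ m)
    (hneg : ∀ S, Valid n S → lam (ng S) = - lam S)
    (hcomp : ∀ S T, Valid n S → Valid n T → S ⊆ T → lam S ≠ - lam T) : n ≤ m := by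
  classical
  have hs := tucker_sum lam h0 hneg n le_rfl
  obtain ⟨p, _, hp⟩ := Finset.exists_ne_zero_of_sum_ne_zero (by rw [hs]; exact one_ne_zero)
  have hI : II n n = Finset.univ := by ext j; simp [mem_II]
  rw [hI] at hp
  set l : Fin n → ℤ := fun i => lam (xs p i) with hl
  have hfac : ∀ i, sgb l i +
      ((Finset.univ.filter (fun j => kap l j < kap l i)).card : ZMod 2) ≠ 0 := by
    intro i
    unfold PA altA at hp
    exact Finset.prod_ne_zero_iff.1 hp i (Finset.mem_univ i)
  have heq : ∀ i j, (l i).natAbs = (l j).natAbs → l i = l j := by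
    intro i j h
    rcases Int.natAbs_eq_natAbs_iff.1 h with h | h
    · exact h
    · exfalso
      rcases le_total i j with hij | hij
      · exact hcomp _ _ (xs_valid p i) (xs_valid p j) (xs_mono p hij) h
      · exact hcomp _ _ (xs_valid p j) (xs_valid p i) (xs_mono p hij) (by
          change l j = - l i; rw [h]; simp)
  have hlt : ∀ i j, kap l i < kap l j → (l i).natAbs ≠ (l j).natAbs := by
    intro i j hij hab
    obtain ⟨t, ht, htmin⟩ := Finset.exists_min_image
      (Finset.univ.filter (fun t => kap l i < kap l t)) (kap l) ⟨j, by simp [hij]⟩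
    simp only [Finset.mem_filter, Finset.mem_univ, true_and] at ht htmin
    have hle : ∀ a b, kap l a < kap l b → (l a).natAbs ≤ (l b).natAbs := by
      intro a b h
      simp only [kap, Prod.Lex.toLex_lt_toLex] at h
      omega
    have htj : (l t).natAbs ≤ (l j).natAbs := by
      rcases (htmin j hij).lt_or_eq with h | h
      · exact hle _ _ h
      · rw [kap_inj l h]
    have hit := hle _ _ ht
    have hlt : l i = l t := heq i t (by omega)
    have hins : Finset.univ.filter (fun s => kap l s < kap l t) =
        insert i (Finset.univ.filter (fun s => kap l s < kap l i)) := by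
      ext s
      simp only [Finset.mem_filter, Finset.mem_univ, true_and, Finset.mem_insert]
      constructor
      · intro h
        rcases lt_trichotomy (kap l s) (kap l i) with h' | h' | h'
        · exact Or.inr h'
        · exact Or.inl (kap_inj l h')
        · exact absurd h (not_lt.2 (htmin s h'))
      · rintro (rfl | h)
        · exact ht
        · exact h.trans ht
    have f1 := hfac i
    have f2 := hfac t
    rw [hins, Finset.card_insert_of_notMem (by simp)] at f2
    have : sgb l t = sgb l i := by simp only [sgb, hlt]
    rw [this] at f2
    push_cast at f2
    rw [← add_assoc] at f2
    generalize sgb l i + ((Finset.univ.filter (fun j => kap l j < kap l i)).card : ZMod 2) = z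
      at f1 f2
    revert z
    decide
  have hinj : ∀ i j, (l i).natAbs = (l j).natAbs → i = j := by
    intro i j h
    rcases lt_trichotomy (kap l i) (kap l j) with h' | h' | h'
    · exact absurd h (hlt _ _ h')
    · exact kap_inj l h'
    · exact absurd h.symm (hlt _ _ h')
  have hc := Finset.card_le_card_of_injOn (s := (Finset.univ : Finset (Fin n)))
    (t := Finset.Icc 1 m) (fun i => (l i).natAbs)
    (by
      intro i _
      have := h0 _ (xs_valid p i)
      have h2 := hm _ (xs_valid p i)
      simp only [Finset.coe_Icc, Set.mem_Icc]
      refine ⟨?_, h2⟩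
      change 1 ≤ (lam (xs p i)).natAbs
      omega)
    (by intro i _ j _ h; exact hinj i j h)
  simpa using hc

theorem ng_ng (S : Finset ℤ) : ng (ng S) = S := by
  ext a; simp [mem_ng]

theorem ng_mono {S T : Finset ℤ} (h : S ⊆ T) : ng S ⊆ ng T := by
  intro a ha
  rw [mem_ng] at ha ⊢
  exact h ha

theorem card_ng (S : Finset ℤ) : (ng S).card = S.card :=
  Finset.card_image_of_injective _ neg_injective

theorem sup_ng (S : Finset ℤ) : (ng S).sup Int.natAbs = S.sup Int.natAbs := by
  unfold ng
  rw [Finset.sup_image]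
  congr 1
  funext a
  simp

theorem sup_mem_iff {n : ℕ} {S : Finset ℤ} (h : Valid n S) :
    ((S.sup Int.natAbs : ℕ) : ℤ) ∈ ng S ↔ ¬ ((S.sup Int.natAbs : ℕ) : ℤ) ∈ S := by
  rw [mem_ng]
  obtain ⟨a, ha, hs⟩ := Finset.exists_mem_eq_sup S h.1 Int.natAbs
  rw [hs]
  have h2 := h.2.2
  constructor
  · intro h3 h4
    exact h2 _ h4 h3
  · intro h3
    rcases Int.natAbs_eq a with h4 | h4
    · rw [← h4] at h3; exact absurd ha h3
    · rw [← h4]; exact ha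

/-- Signed colours visible from `S`. -/
def MM {n k p : ℕ} (f : KSVertex n k → Fin p) (X : Fin p → Set (KSVertex n k))
    (S : Finset ℤ) (i : ℕ) (s : Prop) : Prop :=
  (∃ A : KSVertex n k, A.1 ⊆ S ∧ (f A : ℕ) = i ∧ (A ∈ X (f A) ↔ s)) ∨
  (∃ A : KSVertex n k, A.1 ⊆ ng S ∧ (f A : ℕ) = i ∧ (A ∈ X (f A) ↔ ¬ s))

theorem MM_ng {n k p : ℕ} (f : KSVertex n k → Fin p) (X : Fin p → Set (KSVertex n k))
    (S : Finset ℤ) (i : ℕ) (s : Prop) : MM f X (ng S) i s ↔ MM f X S i (¬ s) := by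
  unfold MM
  rw [ng_ng, not_not, or_comm]

theorem MM_mono {n k p : ℕ} (f : KSVertex n k → Fin p) (X : Fin p → Set (KSVertex n k))
    {S T : Finset ℤ} (h : S ⊆ T) (i : ℕ) (s : Prop) (hS : MM f X S i s) : MM f X T i s := by
  rcases hS with ⟨A, h1, h2⟩ | ⟨A, h1, h2⟩
  · exact Or.inl ⟨A, h1.trans h, h2⟩
  · exact Or.inr ⟨A, h1.trans (ng_mono h), h2⟩

theorem MM_cons {n k p : ℕ} (f : KSVertex n k → Fin p) (X : Fin p → Set (KSVertex n k))
    (hX : ∀ A B : KSVertex n k, f A = f B →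
      (ksPos A.1 B.1 → (A ∈ X (f A) ↔ B ∈ X (f B))) ∧
      (ksNeg A.1 B.1 → ¬ (A ∈ X (f A) ↔ B ∈ X (f B))))
    {S : Finset ℤ} (hS : Valid n S) (i : ℕ) (h1 : MM f X S i True) (h2 : MM f X S i False) :
    False := by
  have pp : ∀ T : Finset ℤ, (∀ a ∈ T, -a ∉ T) → ∀ A B : KSVertex n k, A.1 ⊆ T → B.1 ⊆ T →
      ksPos A.1 B.1 := fun T hT A B hA hB a ha hb => hT a (hA ha) (hB hb)
  have hv : ∀ a ∈ ng S, -a ∉ ng S := by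
    intro a ha hb
    rw [mem_ng] at ha hb
    exact hS.2.2 _ ha hb
  have nn : ∀ A B : KSVertex n k, A.1 ⊆ S → B.1 ⊆ ng S → ksNeg A.1 B.1 := by
    intro A B hA hB
    unfold ksNeg
    rw [Finset.disjoint_left]
    intro a ha hb
    have := hB hb
    rw [mem_ng] at this
    exact hS.2.2 a (hA ha) this
  rcases h1 with ⟨A, a1, a2, a3⟩ | ⟨A, a1, a2, a3⟩ <;>
    rcases h2 with ⟨B, b1, b2, b3⟩ | ⟨B, b1, b2, b3⟩
  · have := (hX A B (Fin.ext (a2.trans b2.symm))).1 (pp S hS.2.2 A B a1 b1)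
    tauto
  · have := (hX A B (Fin.ext (a2.trans b2.symm))).2 (nn A B a1 b1)
    tauto
  · have := (hX B A (Fin.ext (b2.trans a2.symm))).2 (nn B A b1 a1)
    tauto
  · have := (hX A B (Fin.ext (a2.trans b2.symm))).1 (pp _ hv A B a1 b1)
    tauto

/-- least colour -/
noncomputable def cc {n k p : ℕ} (f : KSVertex n k → Fin p) (X : Fin p → Set (KSVertex n k))
    (S : Finset ℤ) : ℕ := sInf {i | MM f X S i True ∨ MM f X S i False}

open Classical in
/-- the Tucker labelling -/
noncomputable def lamb {n k p : ℕ} (f : KSVertex n k → Fin p) (X : Fin p → Set (KSVertex n k))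
    (S : Finset ℤ) : ℤ :=
  if S.card < k then
    (if ((S.sup Int.natAbs : ℕ) : ℤ) ∈ S then (S.card : ℤ) else -(S.card : ℤ))
  else (if MM f X S (cc f X S) True then ((k + cc f X S : ℕ) : ℤ) else -((k + cc f X S : ℕ) : ℤ))

theorem cc_ng {n k p : ℕ} (f : KSVertex n k → Fin p) (X : Fin p → Set (KSVertex n k))
    (S : Finset ℤ) : cc f X (ng S) = cc f X S := by
  unfold cc
  congr 1
  ext i
  change (_ ∨ _) ↔ (_ ∨ _)
  rw [MM_ng, MM_ng, not_true_eq_false, not_false_eq_true, or_comm]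

theorem cc_spec {n k p : ℕ} (f : KSVertex n k → Fin p) (X : Fin p → Set (KSVertex n k))
    {S : Finset ℤ} (hS : Valid n S) (hk : k ≤ S.card) :
    MM f X S (cc f X S) True ∨ MM f X S (cc f X S) False := by
  obtain ⟨A, hA, hc⟩ := Finset.exists_subset_card_eq hk
  let B : KSVertex n k :=
    ⟨A, hc, fun a ha => hS.2.1 a (hA ha), fun a ha hb => hS.2.2 a (hA ha) (hA hb)⟩
  have hne : {i | MM f X S i True ∨ MM f X S i False}.Nonempty := by
    refine ⟨f B, ?_⟩
    by_cases h : B ∈ X (f B)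
    · exact Or.inl (Or.inl ⟨B, hA, rfl, by simp [h]⟩)
    · exact Or.inr (Or.inl ⟨B, hA, rfl, by simp [h]⟩)
  exact Nat.sInf_mem hne

theorem MM_lt {n k p : ℕ} (f : KSVertex n k → Fin p) (X : Fin p → Set (KSVertex n k))
    {S : Finset ℤ} {i : ℕ} {s : Prop} (h : MM f X S i s) : i < p := by
  rcases h with ⟨A, _, h, _⟩ | ⟨A, _, h, _⟩ <;> rw [← h] <;> exact (f A).2

theorem ks_bound {n k p : ℕ} (hk : 1 ≤ k) (f : KSVertex n k → Fin p)
    (X : Fin p → Set (KSVertex n k))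
    (hX : ∀ A B : KSVertex n k, f A = f B →
      (ksPos A.1 B.1 → (A ∈ X (f A) ↔ B ∈ X (f B))) ∧
      (ksNeg A.1 B.1 → ¬ (A ∈ X (f A) ↔ B ∈ X (f B)))) : n ≤ k - 1 + p := by
  have hcp : ∀ S, Valid n S → k ≤ S.card → cc f X S < p := by
    intro S hS h
    rcases cc_spec f X hS h with h | h <;> exact MM_lt f X h
  have hab1 : ∀ S, S.card < k → (lamb f X S).natAbs = S.card := by
    intro S h
    unfold lamb
    rw [if_pos h]
    split_ifs <;> omega
  have hab2 : ∀ S, ¬ S.card < k → (lamb f X S).natAbs = k + cc f X S := by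
    intro S h
    unfold lamb
    rw [if_neg h]
    split_ifs <;> omega
  have hcons : ∀ S, Valid n S → ∀ i, MM f X S i True → MM f X S i False → False :=
    fun S hS i => MM_cons f X hX hS i
  refine tucker (lamb f X) ?_ ?_ ?_ ?_
  · intro S hS
    have := Finset.card_pos.2 hS.1
    by_cases h : S.card < k
    · have := hab1 S h; omega
    · have := hab2 S h; omega
  · intro S hS
    by_cases h : S.card < k
    · have := hab1 S h; omega
    · have := hab2 S h
      have := hcp S hS (by omega)
      omega
  · intro S hS
    unfold lamb
    rw [card_ng, sup_ng, cc_ng]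
    by_cases h : S.card < k
    · rw [if_pos h, if_pos h]
      have := sup_mem_iff hS
      by_cases h2 : ((S.sup Int.natAbs : ℕ) : ℤ) ∈ S
      · rw [if_neg (by tauto), if_pos h2]
      · rw [if_pos (by tauto), if_neg h2, neg_neg]
    · rw [if_neg h, if_neg h, MM_ng, not_true_eq_false]
      have h3 := cc_spec f X hS (by omega)
      have h4 := hcons S hS (cc f X S)
      by_cases h2 : MM f X S (cc f X S) True
      · rw [if_neg (by tauto), if_pos h2]
      · rw [if_pos (h3.resolve_left h2), if_neg h2, neg_neg]
  · intro S T hS hT hST heq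
    have habs : (lamb f X S).natAbs = (lamb f X T).natAbs := by rw [heq, Int.natAbs_neg]
    have hcard := Finset.card_le_card hST
    have hpos := Finset.card_pos.2 hS.1
    by_cases hT' : T.card < k
    · have hS' : S.card < k := by omega
      rw [hab1 S hS', hab1 T hT'] at habs
      have : S = T := Finset.eq_of_subset_of_card_le hST (by omega)
      subst this
      have := hab1 S hS'
      omega
    · by_cases hS' : S.card < k
      · rw [hab1 S hS', hab2 T hT'] at habs
        omega
      · rw [hab2 S hS', hab2 T hT'] at habs
        have hc : cc f X S = cc f X T := by omega
        have h3 := cc_spec f X hS (by omega)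
        have h3' := cc_spec f X hT (by omega)
        have h4 := hcons T hT (cc f X T)
        unfold lamb at heq
        rw [if_neg hS', if_neg hT', hc] at heq
        rw [hc] at h3
        have m1 := MM_mono f X hST (cc f X T) True
        have m2 := MM_mono f X hST (cc f X T) False
        split_ifs at heq with g1 g2 g2
        · omega
        · tauto
        · tauto
        · omega

theorem ks_finite (n k : ℕ) : Finite (KSVertex n k) := by
  have : (Set.univ : Set (KSVertex n k)).Finite := by
    refine Set.Finite.of_finite_image (f := fun A : KSVertex n k => A.1) ?_
      (Subtype.val_injective.injOn)
    refine ((Finset.Icc (-(n : ℤ)) n).powerset : Finset (Finset ℤ)).finite_toSet.subset ?_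
    rintro _ ⟨A, _, rfl⟩
    rw [Finset.mem_coe, Finset.mem_powerset]
    intro a ha
    have := (A.2.2.1 a ha).2
    rw [Finset.mem_Icc]
    omega
  exact Set.finite_univ_iff.1 this

/-- for all `n ≥ k ≥ 1`, `χ_b(KS(n,k)) ≥ n−k+1`. -/
theorem signedKneser_lower_bound (n k : ℕ) (hk : 1 ≤ k) (hkn : k ≤ n) :
    n - k + 1 ≤ balancedChromatic (fun A B : KSVertex n k => ksPos A.1 B.1)
        (fun A B : KSVertex n k => ksNeg A.1 B.1) := by
  unfold balancedChromatic
  refine le_csInf ?_ ?_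
  · have := ks_finite n k
    obtain ⟨m, ⟨e⟩⟩ := Finite.exists_equiv_fin (KSVertex n k)
    refine ⟨m, e, fun i => ⟨∅, ?_⟩⟩
    intro u hu v hv
    have huv : u = v := e.injective ((show e u = i from hu).trans (show e v = i from hv).symm)
    subst huv
    refine ⟨fun _ => Iff.rfl, fun h => ?_⟩
    exfalso
    have h2 : u.1 = ∅ := by simpa [ksNeg] using h
    have h3 := u.2.1
    rw [h2] at h3
    simp at h3
    omega
  · rintro p ⟨f, hf⟩
    choose X hX using hf
    have := ks_bound hk f X (fun A B h => by
      have := hX (f A) A rfl B h.symm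
      rw [← h]
      exact this)
    omega
end

section
/- For every cover of S^d by d antipodally symmetric open sets C_1,…,C_d, at least one C_i contains two antipodal points in the same connected component. (Signed Borsuk–Ulam, open form) -/
namespace SBU
noncomputable section

/-- mod 2 chains of (unoriented, possibly degenerate) simplices given by vertex lists -/
abbrev Ch (E : Type*) := List E →₀ ZMod 2

variable {E F : Type*}

def cone (v : E) : Ch E →ₗ[ZMod 2] Ch E := Finsupp.lmapDomain (ZMod 2) (ZMod 2) (List.cons v)

def push (f : E → F) : Ch E →ₗ[ZMod 2] Ch F := Finsupp.lmapDomain (ZMod 2) (ZMod 2) (List.map f)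

def bdl : List E → Ch E
  | [] => 0
  | v :: l => Finsupp.single l 1 + cone v (bdl l)

def bd : Ch E →ₗ[ZMod 2] Ch E := Finsupp.linearCombination (ZMod 2) bdl

@[simp] lemma cone_single (v : E) (l : List E) (a : ZMod 2) :
    cone v (Finsupp.single l a) = Finsupp.single (v :: l) a := by
  simp [cone]

@[simp] lemma push_single (f : E → F) (l : List E) (a : ZMod 2) :
    push f (Finsupp.single l a) = Finsupp.single (l.map f) a := by
  simp [push]

@[simp] lemma bd_single (l : List E) : bd (Finsupp.single l 1) = bdl l := by
  simp [bd]

lemma ch_add_self (c : Ch E) : c + c = 0 := by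
  ext l; simp [CharTwo.add_self_eq_zero]

/-- extensionality for linear maps out of chains -/
lemma ch_ext {M : Type*} [AddCommGroup M] [Module (ZMod 2) M] {f g : Ch E →ₗ[ZMod 2] M}
    (h : ∀ l, f (Finsupp.single l 1) = g (Finsupp.single l 1)) (c : Ch E) : f c = g c := by
  have : f = g := by
    ext l
    simpa using h l
  rw [this]

lemma bd_cone (v : E) (c : Ch E) : bd (cone v c) = c + cone v (bd c) := by
  refine ch_ext (f := bd ∘ₗ cone v) (g := LinearMap.id + cone v ∘ₗ bd) (fun l => ?_) c
  simp [bdl]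

lemma bd_bd (c : Ch E) : bd (bd c) = 0 := by
  refine ch_ext (f := bd ∘ₗ bd) (g := 0) (fun l => ?_) c
  simp only [LinearMap.comp_apply, bd_single, LinearMap.zero_apply]
  induction l with
  | nil => simp [bdl]
  | cons v l ih => simp [bdl, bd_cone, ih, ch_add_self]

lemma push_cone (f : E → F) (v : E) (c : Ch E) : push f (cone v c) = cone (f v) (push f c) := by
  refine ch_ext (f := push f ∘ₗ cone v) (g := cone (f v) ∘ₗ push f) (fun l => ?_) c
  simp

lemma bd_push (f : E → F) (c : Ch E) : bd (push f c) = push f (bd c) := by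
  refine ch_ext (f := bd ∘ₗ push f) (g := push f ∘ₗ bd) (fun l => ?_) c
  simp only [LinearMap.comp_apply, bd_single, push_single]
  induction l with
  | nil => simp [bdl]
  | cons v l ih => simp [bdl, push_cone, ih]

/-- chains supported on a set of lists -/
abbrev Sup (s : Set (List E)) : Submodule (ZMod 2) (Ch E) := Finsupp.supported (ZMod 2) (ZMod 2) s

lemma sup_ind {M : Type*} [AddCommGroup M] [Module (ZMod 2) M] {s : Set (List E)}
    (f : Ch E →ₗ[ZMod 2] M) (p : Submodule (ZMod 2) M)
    (h : ∀ l ∈ s, f (Finsupp.single l 1) ∈ p) {c : Ch E} (hc : c ∈ Sup s) : f c ∈ p := by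
  have : Sup s ≤ p.comap f := by
    rw [Sup, Finsupp.supported_eq_span_single, Submodule.span_le]
    rintro _ ⟨l, hl, rfl⟩
    exact h l hl
  exact this hc

lemma single_mem {s : Set (List E)} {l : List E} (h : l ∈ s) :
    (Finsupp.single l 1 : Ch E) ∈ Sup s := Finsupp.single_mem_supported _ _ h

lemma bdl_mem (l : List E) (n : ℕ) (hl : l.length = n + 1) :
    bdl l ∈ Sup {m : List E | m.length = n ∧ m ⊆ l} := by
  induction l generalizing n with
  | nil => simp at hl
  | cons v l ih =>
    simp only [bdl]
    simp only [List.length_cons, Nat.add_right_cancel_iff] at hl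
    refine Submodule.add_mem _ (single_mem ⟨hl, by simp⟩) ?_
    cases n with
    | zero =>
      obtain rfl : l = [] := List.length_eq_zero_iff.mp hl
      simp [bdl]
    | succ n =>
      refine sup_ind (cone v) _ ?_ (ih n hl)
      rintro m ⟨hm, hs⟩
      rw [cone_single]
      refine single_mem ⟨by simp [hm], ?_⟩
      exact List.cons_subset_cons v hs

section sd
variable [NormedAddCommGroup E] [NormedSpace ℝ E]

def bary (l : List E) : E := (l.length : ℝ)⁻¹ • l.sum

def sd : ℕ → Ch E →ₗ[ZMod 2] Ch E
  | 0 => LinearMap.id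
  | n + 1 => Finsupp.linearCombination (ZMod 2) (fun l => cone (bary l) (sd n (bdl l)))

lemma sd_succ_single (n : ℕ) (l : List E) :
    sd (n + 1) (Finsupp.single l 1) = cone (bary l) (sd n (bdl l)) := by
  simp [sd]

lemma sd_zero (c : Ch E) : sd 0 c = c := by
  simp [sd]

attribute [irreducible] sd

lemma bd_sd (n : ℕ) (c : Ch E) : bd (sd (n + 1) c) = sd n (bd c) := by
  induction n generalizing c with
  | zero =>
    refine ch_ext (f := bd ∘ₗ sd 1) (g := sd 0 ∘ₗ bd) (fun l => ?_) c
    have := bd_bd (Finsupp.single l 1)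
    rw [bd_single] at this
    simp [sd_succ_single, bd_cone, sd_zero, this]
  | succ n ih =>
    refine ch_ext (f := (bd : Ch E →ₗ[ZMod 2] Ch E) ∘ₗ sd (n + 1 + 1))
      (g := (sd (n + 1) : Ch E →ₗ[ZMod 2] Ch E) ∘ₗ bd) (fun l => ?_) c
    have := bd_bd (Finsupp.single l 1)
    rw [bd_single] at this
    simp [sd_succ_single, bd_cone, ih, this]

lemma bary_neg (l : List E) : bary (l.map Neg.neg) = - bary l := by
  have : (l.map Neg.neg).sum = - l.sum := by
    induction l with
    | nil => simp
    | cons a l ih => simp [ih, add_comm]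
  simp [bary, this]

lemma sd_push (n : ℕ) (c : Ch E) : sd n (push Neg.neg c) = push Neg.neg (sd n c) := by
  induction n generalizing c with
  | zero => simp [sd_zero]
  | succ n ih =>
    refine ch_ext (f := sd (n + 1) ∘ₗ push Neg.neg) (g := push Neg.neg ∘ₗ sd (n + 1))
      (fun l => ?_) c
    have h := bd_push (Neg.neg : E → E) (Finsupp.single l 1)
    rw [bd_single, push_single, bd_single] at h
    simp [sd_succ_single, push_cone, ← ih, h, bary_neg]

lemma norm_list_sum_sub (l : List E) (v : E) (δ : ℝ) (h : ∀ x ∈ l, dist x v ≤ δ) :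
    ‖l.sum - (l.length : ℝ) • v‖ ≤ l.length * δ := by
  induction l with
  | nil => simp
  | cons a l ih =>
    have h1 := ih (fun x hx => h x (by simp [hx]))
    have h2 := h a (by simp)
    have : (a :: l).sum - ((a :: l).length : ℝ) • v = (a - v) + (l.sum - (l.length : ℝ) • v) := by
      simp [add_smul]; abel
    rw [this]
    rw [dist_eq_norm] at h2
    refine (norm_add_le _ _).trans ?_
    simp; linarith

lemma dist_bary (l : List E) (d : ℕ) (hd : l.length ≤ d + 1) (v : E) (hv : v ∈ l) (δ : ℝ)
    (h : ∀ x ∈ l, ∀ y ∈ l, dist x y ≤ δ) : dist v (bary l) ≤ (d / (d + 1) : ℝ) * δ := by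
  classical
  have hδ : 0 ≤ δ := dist_nonneg.trans (h v hv v hv)
  have hp := List.perm_cons_erase hv
  have hlen : l.length = (l.erase v).length + 1 := by simpa using hp.length_eq
  have hsum : l.sum = v + (l.erase v).sum := by simpa using hp.sum_eq
  have h1 := norm_list_sum_sub (l.erase v) v δ (fun x hx => h x (List.mem_of_mem_erase hx) v hv)
  set n := (l.erase v).length with hn
  have hpos : (0 : ℝ) < n + 1 := by positivity
  have h2 : bary l - v = ((n : ℝ) + 1)⁻¹ • ((l.erase v).sum - (n : ℝ) • v) := by
    rw [bary, hlen, hsum, eq_inv_smul_iff₀ hpos.ne', smul_sub]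
    push_cast
    rw [smul_inv_smul₀ hpos.ne', add_smul, one_smul]; abel
  rw [dist_comm, dist_eq_norm, h2, norm_smul, norm_inv, Real.norm_of_nonneg hpos.le]
  calc ((n : ℝ) + 1)⁻¹ * _ ≤ ((n : ℝ) + 1)⁻¹ * (n * δ) := by gcongr
    _ = (n / (n + 1) : ℝ) * δ := by field_simp
    _ ≤ _ := by
      have : (n : ℝ) ≤ d := by exact_mod_cast (by omega : n ≤ d)
      gcongr ?_ * δ
      rw [div_le_div_iff₀ hpos (by positivity)]
      nlinarith

lemma bary_mem (l : List E) (hl : l ≠ []) (K : Set E) (hK : Convex ℝ K) (h : ∀ x ∈ l, x ∈ K) :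
    bary l ∈ K := by
  induction l with
  | nil => simp at hl
  | cons a l ih =>
    by_cases hl' : l = []
    · subst hl'; simpa [bary] using h
    · have h1 := ih hl' (fun x hx => h x (by simp [hx]))
      have h2 := h a (by simp)
      have hpos : (0 : ℝ) < l.length := by exact_mod_cast List.length_pos_iff.mpr hl'
      have h3 := hK h2 h1 (a := 1 / (l.length + 1)) (b := l.length / (l.length + 1))
        (by positivity) (by positivity) (by field_simp; ring)
      convert h3 using 1
      simp only [bary, smul_smul, List.length_cons, List.sum_cons, smul_add]
      push_cast
      congr 2
      · field_simp
      · field_simp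

lemma sd_mem (d : ℕ) (n : ℕ) (hn : n ≤ d + 1) (l : List E) (hl : l.length = n) (δ : ℝ)
    (h : ∀ x ∈ l, ∀ y ∈ l, dist x y ≤ δ) (K : Set E) (hK : Convex ℝ K) (hlK : ∀ x ∈ l, x ∈ K) :
    sd n (Finsupp.single l 1) ∈ Sup {m : List E | m.length = n ∧ (∀ x ∈ m, x ∈ K) ∧
      ∀ x ∈ m, ∀ y ∈ m, dist x y ≤ (d / (d + 1) : ℝ) * δ} := by
  induction n generalizing l K with
  | zero =>
    obtain rfl : l = [] := List.length_eq_zero_iff.mp hl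
    rw [sd_zero]
    exact single_mem (by simp)
  | succ n ih =>
    rw [sd_succ_single]
    have hne : l ≠ [] := by rintro rfl; simp at hl
    have hv : ∃ v, v ∈ l := List.exists_mem_of_ne_nil l hne
    obtain ⟨v, hv⟩ := hv
    have hδ : 0 ≤ δ := dist_nonneg.trans (h v hv v hv)
    set r := (d / (d + 1) : ℝ) * δ with hr
    have hr0 : 0 ≤ r := by positivity
    have key : sd n (bdl l) ∈ Sup {m : List E | m.length = n ∧
        (∀ x ∈ m, x ∈ K ∩ Metric.closedBall (bary l) r) ∧ ∀ x ∈ m, ∀ y ∈ m, dist x y ≤ r} := by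
      refine sup_ind (sd n) _ ?_ (bdl_mem l n hl)
      rintro m ⟨hm, hs⟩
      refine ih (by omega) m hm (fun x hx y hy => h x (hs hx) y (hs hy)) _
        (hK.inter (convex_closedBall _ _)) (fun x hx => ⟨hlK x (hs hx), ?_⟩)
      exact dist_bary l d (by omega) x (hs hx) δ h
    refine sup_ind (cone (bary l)) _ ?_ key
    rintro m ⟨hm, hmK, hmd⟩
    rw [cone_single]
    refine single_mem ⟨by simp [hm], ?_, ?_⟩
    · intro x hx
      rcases List.mem_cons.mp hx with rfl | hx
      · exact bary_mem l hne K hK hlK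
      · exact (hmK x hx).1
    · intro x hx y hy
      rcases List.mem_cons.mp hx with rfl | hx <;> rcases List.mem_cons.mp hy with rfl | hy
      · simpa using hr0
      · rw [dist_comm]; exact (hmK y hy).2
      · exact (hmK x hx).2
      · exact hmd x hx y hy

/-- lists of length n, contained in a member of a family of sets, of diameter at most δ -/
def Fine {ι : Type*} (K : ι → Set E) (n : ℕ) (δ : ℝ) : Set (List E) :=
  {m | m.length = n ∧ (∃ i, ∀ x ∈ m, x ∈ K i) ∧ ∀ x ∈ m, ∀ y ∈ m, dist x y ≤ δ}

lemma sd_iter_mem {ι : Type*} (K : ι → Set E) (hK : ∀ i, Convex ℝ (K i)) (d n : ℕ)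
    (hn : n ≤ d + 1) (δ : ℝ) (c : Ch E) (hc : c ∈ Sup (Fine K n δ)) (N : ℕ) :
    (sd n)^[N] c ∈ Sup (Fine K n ((d / (d + 1) : ℝ) ^ N * δ)) := by
  induction N with
  | zero => simpa using hc
  | succ N ih =>
    rw [Function.iterate_succ_apply']
    refine sup_ind (sd n) _ ?_ ih
    rintro l ⟨hl, ⟨i, hi⟩, hd⟩
    have := sd_mem d n hn l hl _ hd (K i) (hK i) hi
    refine Finsupp.supported_mono ?_ this
    rintro m ⟨h1, h2, h3⟩
    refine ⟨h1, ⟨i, h2⟩, ?_⟩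
    rw [pow_succ']; simpa [mul_assoc] using h3

end sd

/-! Fan's counting -/

inductive Alt : Bool → Multiset ℤ → Prop
  | nil (ε : Bool) : Alt ε 0
  | cons (ε : Bool) (a : ℤ) (s : Multiset ℤ) (h0 : a ≠ 0) (hs : decide (0 < a) = ε)
      (hlt : ∀ b ∈ s, |a| < |b|) (h : Alt (!ε) s) : Alt ε (a ::ₘ s)

lemma alt_cons_iff (ε : Bool) (a : ℤ) (s : Multiset ℤ) (h0 : a ≠ 0) (hlt : ∀ b ∈ s, |a| < |b|) :
    Alt ε (a ::ₘ s) ↔ decide (0 < a) = ε ∧ Alt (!ε) s := by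
  constructor
  · intro h
    generalize ht : a ::ₘ s = t at h
    cases h with
    | nil => simp at ht
    | cons _ a' s' h0' hs' hlt' h' =>
      have : a = a' := by
        by_contra hne
        have h1 : a ∈ s' := by
          have : a ∈ a' ::ₘ s' := by rw [← ht]; simp
          simpa [hne] using this
        have h2 : a' ∈ s := by
          have : a' ∈ a ::ₘ s := by rw [ht]; simp
          simpa [Ne.symm hne] using this
        exact lt_asymm (hlt _ h2) (hlt' _ h1)
      subst this
      rw [Multiset.cons_inj_right] at ht
      subst ht
      exact ⟨hs', h'⟩
  · rintro ⟨h1, h2⟩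
    exact Alt.cons ε a s h0 h1 hlt h2

lemma alt_nodup {ε : Bool} {s : Multiset ℤ} (h : Alt ε s) : (s.map (fun x => |x|)).Nodup := by
  induction h with
  | nil => simp
  | cons ε a s h0 hs hlt h ih =>
    simp only [Multiset.map_cons, Multiset.nodup_cons]
    refine ⟨?_, ih⟩
    intro hm
    obtain ⟨b, hb, hab⟩ := Multiset.mem_map.mp hm
    have := hlt b hb
    omega

lemma alt_neg {ε : Bool} {s : Multiset ℤ} (h : Alt ε s) : Alt (!ε) (s.map Neg.neg) := by
  induction h with
  | nil => exact Alt.nil _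
  | cons ε a s h0 hs hlt h ih =>
    rw [Multiset.map_cons]
    refine Alt.cons _ _ _ (by simpa using h0) ?_ ?_ ih
    · subst hs
      rcases lt_or_gt_of_ne h0 with h | h
      · simp [h, h.le]
      · simp [h, h.le]
    · intro b hb
      obtain ⟨c, hc, rfl⟩ := Multiset.mem_map.mp hb
      simpa using hlt c hc

open Classical in
def av (ε : Bool) (s : Multiset ℤ) : ZMod 2 := if Alt ε s then 1 else 0

lemma av_true {ε : Bool} {s : Multiset ℤ} (h : Alt ε s) : av ε s = 1 := if_pos h

lemma av_false {ε : Bool} {s : Multiset ℤ} (h : ¬ Alt ε s) : av ε s = 0 := if_neg h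

lemma av_congr {ε ε' : Bool} {s s' : Multiset ℤ} (h : Alt ε s ↔ Alt ε' s') :
    av ε s = av ε' s' := by
  by_cases h' : Alt ε s
  · rw [av_true h', av_true (h.mp h')]
  · rw [av_false h', av_false (fun h2 => h' (h.mpr h2))]

lemma av_neg (ε : Bool) (s : Multiset ℤ) : av ε (s.map Neg.neg) = av (!ε) s := by
  have : Alt ε (s.map Neg.neg) ↔ Alt (!ε) s := by
    constructor
    · intro h
      have := alt_neg h
      simpa [Multiset.map_map] using this
    · intro h
      simpa using alt_neg h
  exact av_congr this

lemma av_zero (ε : Bool) : av ε 0 = 1 := by simp [av, Alt.nil]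

lemma av_cons (ε : Bool) (a : ℤ) (s : Multiset ℤ) (h0 : a ≠ 0) (hlt : ∀ b ∈ s, |a| < |b|) :
    av ε (a ::ₘ s) = if decide (0 < a) = ε then av (!ε) s else 0 := by
  have hi := alt_cons_iff ε a s h0 hlt
  by_cases h : decide (0 < a) = ε
  · rw [if_pos h]
    exact av_congr (hi.trans (and_iff_right h))
  · rw [if_neg h]
    exact av_false (fun h' => h (hi.mp h').1)

lemma av_dup (ε : Bool) (a : ℤ) (s : Multiset ℤ) : av ε (a ::ₘ a ::ₘ s) = 0 := by
  unfold av
  rw [if_neg]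
  intro h
  have := alt_nodup h
  simp at this

/-- sum over facets -/
def fs (ε : Bool) (s : Multiset ℤ) : ZMod 2 := (s.map (fun x => av ε (s.erase x))).sum

lemma cons_erase' (a x : ℤ) (s : Multiset ℤ) (hx : x ∈ s) :
    (a ::ₘ s).erase x = a ::ₘ s.erase x := Multiset.erase_cons_tail_of_mem hx

lemma fs_cons (ε : Bool) (a : ℤ) (s : Multiset ℤ) :
    fs ε (a ::ₘ s) = av ε s + (s.map (fun x => av ε (a ::ₘ s.erase x))).sum := by
  unfold fs
  rw [Multiset.map_cons, Multiset.sum_cons, Multiset.erase_cons_head]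
  congr 2
  exact Multiset.map_congr rfl (fun x hx => by rw [cons_erase' a x s hx])

lemma fan_facet (n : ℕ) : ∀ (ε : Bool) (s : Multiset ℤ), s.card = n →
    (∀ x ∈ s, ∀ y ∈ s, x ≠ -y) → fs ε s = av ε s + av (!ε) s := by
  induction n with
  | zero =>
    intro ε s hs _
    obtain rfl := Multiset.card_eq_zero.mp hs
    simp [fs, av_zero, CharTwo.add_self_eq_zero]
  | succ n ih =>
    intro ε s hs hc
    have hne : s.toFinset.Nonempty := by
      rw [Multiset.toFinset_nonempty]; rintro rfl; simp at hs
    obtain ⟨a, ha, hmin⟩ := Finset.exists_min_image s.toFinset (fun x => |x|) hne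
    rw [Multiset.mem_toFinset] at ha
    obtain ⟨t, rfl⟩ := Multiset.exists_cons_of_mem ha
    have h0 : a ≠ 0 := by
      have := hc a ha a ha; omega
    by_cases hat : a ∈ t
    · obtain ⟨u, rfl⟩ := Multiset.exists_cons_of_mem hat
      rw [fs_cons, av_dup, av_dup, Multiset.map_cons, Multiset.sum_cons, Multiset.erase_cons_head,
        ← add_assoc, CharTwo.add_self_eq_zero, zero_add]
      rw [add_zero]
      apply Multiset.sum_eq_zero
      intro z hz
      obtain ⟨x, hx, rfl⟩ := Multiset.mem_map.mp hz
      rw [cons_erase' a x u hx, av_dup]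
    · have hlt : ∀ b ∈ t, |a| < |b| := by
        intro b hb
        have h1 := hmin b (by simp [hb])
        have h2 := hc a ha b (by simp [hb])
        have h3 : a ≠ b := by rintro rfl; exact hat hb
        refine lt_of_le_of_ne h1 (fun h => ?_)
        rcases abs_eq_abs.mp h with h | h
        · exact h3 h
        · exact h2 h
      have e1 : t.map (fun x => av ε (a ::ₘ t.erase x)) =
          t.map (fun x => if decide (0 < a) = ε then av (!ε) (t.erase x) else 0) :=
        Multiset.map_congr rfl (fun x hx => av_cons ε a _ h0
          (fun b hb => hlt b (Multiset.mem_of_mem_erase hb)))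
      rw [fs_cons, e1, av_cons ε a t h0 hlt, av_cons (!ε) a t h0 hlt]
      have ih' := ih (!ε) t (by simpa using hs)
        (fun x hx y hy => hc x (by simp [hx]) y (by simp [hy]))
      unfold fs at ih'
      by_cases hε : decide (0 < a) = ε
      · have : ¬ (decide (0 < a) = !ε) := by rw [hε]; cases ε <;> simp
        simp only [hε, if_true] at this ⊢
        rw [ih', if_neg (by cases ε <;> simp)]
        simp only [Bool.not_not]
        rw [add_zero, add_comm (av (!ε) t), ← add_assoc, CharTwo.add_self_eq_zero, zero_add]
      · have : decide (0 < a) = !ε := by cases ε <;> simp_all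
        simp [this]

lemma fs_bdl (g : Multiset ℤ → ZMod 2) (lam : E → ℤ) (l : List E) :
    Finsupp.linearCombination (ZMod 2) (fun m : List E => g (m.map lam : List ℤ)) (bdl l) =
      (((l.map lam : List ℤ) : Multiset ℤ).map
        (fun x => g (((l.map lam : List ℤ) : Multiset ℤ).erase x))).sum := by
  induction l generalizing g with
  | nil => simp [bdl]
  | cons v l ih =>
    have h : Finsupp.linearCombination (ZMod 2) (fun m : List E => g (m.map lam : List ℤ))
        (cone v (bdl l)) = Finsupp.linearCombination (ZMod 2)
          (fun m : List E => g (lam v ::ₘ (m.map lam : List ℤ))) (bdl l) := by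
      refine ch_ext (f := Finsupp.linearCombination (ZMod 2)
        (fun m : List E => g (m.map lam : List ℤ)) ∘ₗ cone v) (fun m => ?_) _
      simp
    simp only [bdl, map_add, h]
    rw [ih (fun m => g (lam v ::ₘ m))]
    rw [List.map_cons, ← Multiset.cons_coe, Multiset.map_cons, Multiset.sum_cons,
      Multiset.erase_cons_head]
    congr 1
    · simp
    · congr 1
      exact Multiset.map_congr rfl (fun x hx => by rw [cons_erase' _ x _ hx])

def al (ε : Bool) (lam : E → ℤ) : Ch E →ₗ[ZMod 2] ZMod 2 :=
  Finsupp.linearCombination (ZMod 2) (fun m : List E => av ε (m.map lam : List ℤ))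

theorem fan [Neg E] (d : ℕ) (lam : E → ℤ) (hodd : ∀ x, lam (-x) = - lam x)
    (hbound : ∀ x, |lam x| ≤ d) (v : E) (hv : lam v ≠ 0) (h : ℕ → Ch E)
    (h0 : h 0 = Finsupp.single [v] 1)
    (hbd : ∀ k < d, bd (h (k + 1)) = h k + push Neg.neg (h k))
    (hsup : ∀ k ≤ d, h k ∈ Sup {l : List E | l.length = k + 1 ∧
      ∀ x ∈ l, ∀ y ∈ l, lam x ≠ - lam y}) : False := by
  have key : ∀ k ≤ d, al true lam (h k) + al false lam (h k) = 1 := by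
    intro k hk
    induction k with
    | zero =>
      rw [h0]
      have h1 : ∀ ε, al ε lam (Finsupp.single [v] 1) = if decide (0 < lam v) = ε then 1 else 0 := by
        intro ε
        have := av_cons ε (lam v) 0 hv (by simp)
        simp [av_zero] at this
        simp [al, this]
      rw [h1, h1]
      by_cases h : 0 < lam v <;> simp [h]
    | succ k ih =>
      have ih := ih (by omega)
      have h1 : al true lam (bd (h (k+1))) = al true lam (h (k+1)) + al false lam (h (k+1)) := by
        have := sup_ind (al true lam ∘ₗ bd - (al true lam + al false lam)) ⊥ ?_ (hsup (k+1) hk)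
        · simpa [sub_eq_zero] using this
        · rintro l ⟨hl, hc⟩
          have h2 := fs_bdl (av true) lam l
          have h3 := fan_facet _ true ((l.map lam : List ℤ) : Multiset ℤ) rfl (by
            intro x hx y hy
            simp only [Multiset.mem_coe, List.mem_map] at hx hy
            obtain ⟨x, hx, rfl⟩ := hx
            obtain ⟨y, hy, rfl⟩ := hy
            exact hc x hx y hy)
          unfold fs at h3
          rw [h3] at h2
          simp only [Submodule.mem_bot, LinearMap.sub_apply, LinearMap.comp_apply, bd_single,
            LinearMap.add_apply, sub_eq_zero]
          simp only [al, Finsupp.linearCombination_single, one_smul]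
          exact h2
      have h2 : al true lam (push Neg.neg (h k)) = al false lam (h k) := by
        refine ch_ext (f := al true lam ∘ₗ push Neg.neg) (fun m => ?_) _
        have := av_neg true ((m.map lam : List ℤ) : Multiset ℤ)
        simp only [Multiset.map_coe, List.map_map, Bool.not_true] at this
        simp only [al, LinearMap.comp_apply, push_single, Finsupp.linearCombination_single,
          one_smul, ← this, List.map_map]
        congr 3
        funext x; simp [hodd]
      rw [← h1, hbd k (by omega), map_add, h2, ih]
  have hz : ∀ ε, al ε lam (h d) = 0 := by
    intro ε
    have := sup_ind (al ε lam) ⊥ ?_ (hsup d le_rfl)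
    · simpa using this
    · rintro l ⟨hl, hc⟩
      simp only [al, Finsupp.linearCombination_single, one_smul, Submodule.mem_bot, av]
      rw [if_neg]
      intro hA
      have hn := alt_nodup hA
      rw [← Multiset.toFinset_card_eq_card_iff_nodup] at hn
      have hs : (((l.map lam : List ℤ) : Multiset ℤ).map (fun x => |x|)).toFinset ⊆
          Finset.Icc 1 (d : ℤ) := by
        intro z hz
        simp only [Multiset.mem_toFinset, Multiset.mem_map, Multiset.mem_coe, List.mem_map] at hz
        obtain ⟨_, ⟨x, hx, rfl⟩, rfl⟩ := hz
        have h1 := hbound x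
        have h2 := hc x hx x hx
        have h3 : 0 < |lam x| := abs_pos.mpr (by omega)
        simp only [Finset.mem_Icc]
        omega
      have := Finset.card_le_card hs
      rw [hn] at this
      simp [hl] at this
  have := key d le_rfl
  simp [hz] at this

section sphere

lemma push_neg_neg {E : Type*} [InvolutiveNeg E] (c : Ch E) :
    push Neg.neg (push Neg.neg c) = c := by
  refine ch_ext (f := push Neg.neg ∘ₗ push Neg.neg) (g := LinearMap.id) (fun l => ?_) c
  simp

abbrev Eu (d : ℕ) := EuclideanSpace ℝ (Fin (d + 1))

def ev (d k : ℕ) : Eu d := EuclideanSpace.single (Fin.ofNat (d + 1) k) (1 : ℝ)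

def hem (d : ℕ) : ℕ → Ch (Eu d)
  | 0 => Finsupp.single [ev d 0] 1
  | k + 1 => cone (ev d (k + 1)) (hem d k + push Neg.neg (hem d k))

lemma bd_hem_aux (d k : ℕ) : push Neg.neg (bd (hem d k)) = bd (hem d k) ∧
    bd (hem d (k + 1)) = hem d k + push Neg.neg (hem d k) := by
  have step : ∀ k, push Neg.neg (bd (hem d k)) = bd (hem d k) →
      bd (hem d (k + 1)) = hem d k + push Neg.neg (hem d k) := by
    intro k hk
    rw [hem, bd_cone, map_add, bd_push, hk, ch_add_self, map_zero, add_zero]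
  have main : push Neg.neg (bd (hem d k)) = bd (hem d k) := by
    induction k with
    | zero => simp [hem, bdl]
    | succ k ih => rw [step k ih, map_add, push_neg_neg, add_comm]
  exact ⟨main, step k main⟩

def Ks (d : ℕ) (s : Fin (d + 1) → ℤˣ) : Set (Eu d) :=
  {x | ‖x‖ ≤ 1 ∧ ∑ i, ((s i : ℤ) : ℝ) * x i = 1}

lemma Ks_convex (d : ℕ) (s : Fin (d + 1) → ℤˣ) : Convex ℝ (Ks d s) := by
  rintro x ⟨hx1, hx2⟩ y ⟨hy1, hy2⟩ a b ha hb hab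
  refine ⟨?_, ?_⟩
  · have := (convex_closedBall (0 : Eu d) 1) (by simpa using hx1) (by simpa using hy1) ha hb hab
    simpa using this
  · have : ∀ i, ((s i : ℤ) : ℝ) * (a • x + b • y) i =
        a * (((s i : ℤ) : ℝ) * x i) + b * (((s i : ℤ) : ℝ) * y i) := by
      intro i; simp; ring
    simp only [this, Finset.sum_add_distrib, ← Finset.mul_sum, hx2, hy2, mul_one, hab]

lemma Ks_compact (d : ℕ) (s : Fin (d + 1) → ℤˣ) : IsCompact (Ks d s) := by
  have : Ks d s = Metric.closedBall 0 1 ∩ {x : Eu d | ∑ i, ((s i : ℤ) : ℝ) * x i = 1} := by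
    ext x; simp [Ks]
  rw [this]
  refine (isCompact_closedBall _ _).inter_right ?_
  exact isClosed_eq (by fun_prop) continuous_const

lemma Ks_ne (d : ℕ) (s : Fin (d + 1) → ℤˣ) (x : Eu d) (hx : x ∈ Ks d s) : x ≠ 0 := by
  rintro rfl
  have := hx.2
  simp at this

lemma hem_mem (d k : ℕ) (hk : k ≤ d) : hem d k ∈ Sup {l : List (Eu d) | l.length = k + 1 ∧
    ∃ s : Fin (d + 1) → ℤˣ, ∀ x ∈ l, ∃ i : Fin (d + 1), i.val ≤ k ∧
      x = EuclideanSpace.single i ((s i : ℤ) : ℝ)} := by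
  induction k with
  | zero =>
    refine single_mem ⟨by simp, fun _ => 1, ?_⟩
    intro x hx
    refine ⟨Fin.ofNat (d + 1) 0, by simp, ?_⟩
    simpa [ev] using hx
  | succ k ih =>
    have ih := ih (by omega)
    set S := {l : List (Eu d) | l.length = k + 1 ∧
      ∃ s : Fin (d + 1) → ℤˣ, ∀ x ∈ l, ∃ i : Fin (d + 1), i.val ≤ k ∧
      x = EuclideanSpace.single i ((s i : ℤ) : ℝ)} with hS
    have h1 : hem d k + push Neg.neg (hem d k) ∈ Sup S := by
      refine Submodule.add_mem _ ih (sup_ind (push Neg.neg) _ ?_ ih)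
      rintro l ⟨hl, s, hs⟩
      rw [push_single]
      refine single_mem ⟨by simpa using hl, fun i => - s i, ?_⟩
      intro x hx
      obtain ⟨y, hy, rfl⟩ := List.mem_map.mp hx
      obtain ⟨i, hi, rfl⟩ := hs y hy
      refine ⟨i, hi, ?_⟩
      ext j
      by_cases hj : j = i <;> simp [hj]
    rw [hem]
    refine sup_ind (cone _) _ ?_ h1
    rintro l ⟨hl, s, hs⟩
    rw [cone_single]
    have hval : (Fin.ofNat (d + 1) (k + 1)).val = k + 1 := by
      simp [Fin.ofNat]; omega
    refine single_mem ⟨by simpa using hl, Function.update s (Fin.ofNat (d + 1) (k + 1)) 1, ?_⟩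
    intro x hx
    rcases List.mem_cons.mp hx with rfl | hx
    · exact ⟨Fin.ofNat (d + 1) (k + 1), hval.le, by simp [ev]⟩
    · obtain ⟨i, hi, rfl⟩ := hs x hx
      refine ⟨i, by omega, ?_⟩
      rw [Function.update_of_ne]
      rintro rfl
      omega

lemma hem_fine (d k : ℕ) (hk : k ≤ d) : hem d k ∈ Sup (Fine (Ks d) (k + 1) 2) := by
  refine Finsupp.supported_mono ?_ (hem_mem d k hk)
  rintro l ⟨hl, s, hs⟩
  have hK : ∀ x ∈ l, x ∈ Ks d s := by
    intro x hx
    obtain ⟨i, hi, rfl⟩ := hs x hx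
    have h1 : (((s i : ℤ) : ℝ)) * ((s i : ℤ) : ℝ) = 1 := by
      rcases Int.units_eq_one_or (s i) with h | h <;> simp [h]
    have h2 : |((s i : ℤ) : ℝ)| = 1 := by
      rcases Int.units_eq_one_or (s i) with h | h <;> simp [h]
    refine ⟨by simp [h2], ?_⟩
    rw [Finset.sum_eq_single i]
    · simpa using h1
    · intro j _ hj; simp [hj]
    · simp
  refine ⟨hl, ⟨s, hK⟩, ?_⟩
  intro x hx y hy
  have h1 := (hK x hx).1
  have h2 := (hK y hy).1
  rw [dist_eq_norm]
  linarith [norm_sub_le x y]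

lemma iter_lin (n N : ℕ) {d : ℕ} (a b : Ch (Eu d)) :
    (sd n)^[N] (a + b) = (sd n)^[N] a + (sd n)^[N] b := by
  induction N with
  | zero => rfl
  | succ N ih => simp only [Function.iterate_succ_apply', ih, map_add]

lemma iter_push (n N : ℕ) {d : ℕ} (a : Ch (Eu d)) :
    (sd n)^[N] (push Neg.neg a) = push Neg.neg ((sd n)^[N] a) := by
  induction N with
  | zero => rfl
  | succ N ih => simp only [Function.iterate_succ_apply', ih, sd_push]

lemma iter_bd (n N : ℕ) {d : ℕ} (a : Ch (Eu d)) :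
    bd ((sd (n + 1))^[N] a) = (sd n)^[N] (bd a) := by
  induction N with
  | zero => rfl
  | succ N ih => simp only [Function.iterate_succ_apply', ← ih, bd_sd]

lemma iter_pt (N : ℕ) {d : ℕ} (v : Eu d) :
    (sd 1)^[N] (Finsupp.single [v] 1) = Finsupp.single [v] 1 := by
  induction N with
  | zero => rfl
  | succ N ih =>
    rw [Function.iterate_succ_apply', ih, sd_succ_single, sd_zero]
    simp [bdl, bary]

/-- Borsuk–Ulam -/
theorem borsuk_ulam (d : ℕ) (f : Eu d → Fin d → ℝ) (hf : Continuous f)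
    (hodd : ∀ x, f (-x) = - f x) (hne : ∀ x, x ≠ 0 → f x ≠ 0) : False := by
  have hev : ev d 0 ≠ 0 := by
    intro h
    have := congrArg (fun x : Eu d => x (Fin.ofNat (d + 1) 0)) h
    simp [ev] at this
  rcases Nat.eq_zero_or_pos d with rfl | hd
  · exact hne _ hev (Subsingleton.elim _ _)
  haveI : Nonempty (Fin d) := ⟨⟨0, hd⟩⟩
  set X : Set (Eu d) := ⋃ s, Ks d s with hX
  have hXc : IsCompact X := isCompact_iUnion (fun s => Ks_compact d s)
  have hX0 : ∀ x ∈ X, x ≠ 0 := by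
    intro x hx
    obtain ⟨s, hs⟩ := Set.mem_iUnion.mp hx
    exact Ks_ne d s x hs
  have hε : ∃ ε > 0, ∀ x ∈ X, ε ≤ ‖f x‖ := by
    rcases X.eq_empty_or_nonempty with h | h
    · exact ⟨1, one_pos, by simp [h]⟩
    · obtain ⟨x, hx, hmin⟩ := hXc.exists_isMinOn h hf.norm.continuousOn
      exact ⟨‖f x‖, norm_pos_iff.mpr (hne x (hX0 x hx)), fun y hy => hmin hy⟩
  obtain ⟨ε, hε0, hε⟩ := hε
  have huc := hXc.uniformContinuousOn_of_continuous hf.continuousOn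
  obtain ⟨δ, hδ0, hδ⟩ := Metric.uniformContinuousOn_iff.mp huc ε hε0
  have hj : ∀ g : Fin d → ℝ, ∃ j, ∀ i, g i ≤ g j := fun g => Finite.exists_max g
  choose J hJ using hj
  let jj : Eu d → Fin d := fun x => J (fun i => |f x i|)
  have hjodd : ∀ x, jj (-x) = jj x := by
    intro x; simp [jj, hodd]
  have hjn : ∀ x, ‖f x‖ ≤ |f x (jj x)| := by
    intro x
    rw [pi_norm_le_iff_of_nonneg (abs_nonneg _)]
    intro i
    exact hJ (fun i => |f x i|) i
  let lam : Eu d → ℤ := fun x => (SignType.sign (f x (jj x)) : ℤ) * ((jj x).val + 1)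
  have hcomp : ∀ x ∈ X, ∀ y ∈ X, dist x y < δ → lam x ≠ - lam y := by
    intro x hx y hy hxy h
    have h1 := hδ x hx y hy hxy
    have h2 := (hε x hx).trans (hjn x)
    have h3 := (hε y hy).trans (hjn y)
    have hd' : ∀ i, |f x i - f y i| < ε := fun i =>
      lt_of_le_of_lt (dist_le_pi_dist (f x) (f y) i) h1
    simp only [lam] at h
    have hx0 : f x (jj x) ≠ 0 := abs_pos.mp (by linarith)
    have hy0 : f y (jj y) ≠ 0 := abs_pos.mp (by linarith)
    have hd1 := hd' (jj x)
    have e : jj x = jj y → False := by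
      intro e
      rw [← e] at h h3 hy0
      rcases lt_or_gt_of_ne hx0 with hx | hx <;> rcases lt_or_gt_of_ne hy0 with hy | hy <;>
        simp only [sign_neg, sign_pos, hx, hy] at h
      · simp at h; omega
      · rw [abs_of_neg hx] at h2; rw [abs_of_pos hy] at h3
        linarith [(abs_lt.mp hd1).1]
      · rw [abs_of_pos hx] at h2; rw [abs_of_neg hy] at h3
        linarith [(abs_lt.mp hd1).2]
      · simp at h; omega
    apply e
    apply Fin.ext
    rcases lt_or_gt_of_ne hx0 with hx | hx <;> rcases lt_or_gt_of_ne hy0 with hy | hy <;>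
        simp only [sign_neg, sign_pos, hx, hy] at h <;> simp at h <;> omega
  obtain ⟨N, hN⟩ : ∃ N : ℕ, (d / (d + 1) : ℝ) ^ N * 2 < δ := by
    obtain ⟨N, hN⟩ := exists_pow_lt_of_lt_one (half_pos hδ0)
      (show (d / (d + 1) : ℝ) < 1 by rw [div_lt_one (by positivity)]; linarith)
    exact ⟨N, by linarith⟩
  refine fan d lam ?_ ?_ (ev d 0) ?_ (fun k => (sd (k + 1))^[N] (hem d k)) ?_ ?_ ?_
  · intro x
    simp only [lam, hjodd, hodd, Pi.neg_apply, Left.sign_neg]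
    simp
  · intro x
    have h1 : |((SignType.sign (f x (jj x)) : SignType) : ℤ)| ≤ 1 := by
      cases SignType.sign (f x (jj x)) <;> simp
    have h2 : |(((jj x).val : ℤ) + 1)| ≤ d := by
      rw [abs_of_nonneg (by positivity)]
      have := (jj x).isLt
      omega
    simp only [lam, abs_mul]
    calc _ ≤ 1 * (d : ℤ) := mul_le_mul h1 h2 (abs_nonneg _) (by norm_num)
      _ = d := one_mul _
  · have h1 := hjn (ev d 0)
    have h2 : 0 < ‖f (ev d 0)‖ := norm_pos_iff.mpr (hne _ hev)
    have h3 : f (ev d 0) (jj (ev d 0)) ≠ 0 := abs_pos.mp (by linarith)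
    simp only [lam]
    refine mul_ne_zero ?_ (by positivity)
    rcases lt_or_gt_of_ne h3 with h | h
    · simp [sign_neg h]
    · simp [sign_pos h]
  · exact iter_pt N _
  · intro k hk
    rw [iter_bd, (bd_hem_aux d k).2, iter_lin, iter_push]
  · intro k hk
    refine Finsupp.supported_mono ?_
      (sd_iter_mem (Ks d) (Ks_convex d) d (k + 1) (by omega) 2 _ (hem_fine d k hk) N)
    rintro l ⟨hl, ⟨s, hs⟩, hdist⟩
    refine ⟨hl, fun x hx y hy => hcomp x (Set.mem_iUnion.mpr ⟨s, hs x hx⟩) y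
      (Set.mem_iUnion.mpr ⟨s, hs y hy⟩) (lt_of_le_of_lt (hdist x hx y hy) hN)⟩

end sphere

/-- splitting a symmetric open set without connected antipodal pairs -/
lemma split {E : Type*} [NormedAddCommGroup E] [NormedSpace ℝ E] (D : Set E) (hD : IsOpen D)
    (hsymm : ∀ x ∈ D, -x ∈ D) (hno : ∀ x ∈ D, -x ∉ connectedComponentIn D x) :
    ∃ A : Set E, IsOpen A ∧ A ⊆ D ∧ (∀ x ∈ A, -x ∉ A) ∧ ∀ x ∈ D, x ∈ A ∨ -x ∈ A := by
  classical
  have hcn : ∀ x ∈ D, ∀ y ∈ connectedComponentIn D x, -y ∈ connectedComponentIn D (-x) := by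
    intro x hx y hy
    have h1 : IsPreconnected (Neg.neg '' connectedComponentIn D x) :=
      isPreconnected_connectedComponentIn.image _ continuous_neg.continuousOn
    have h2 : Neg.neg '' connectedComponentIn D x ⊆ connectedComponentIn D (-x) := by
      refine h1.subset_connectedComponentIn ⟨x, mem_connectedComponentIn hx, rfl⟩ ?_
      rintro _ ⟨z, hz, rfl⟩
      exact hsymm z (connectedComponentIn_subset _ _ hz)
    exact h2 ⟨y, hy, rfl⟩
  let R : Set E → Set E → Prop := WellOrderingRel
  refine ⟨{x | x ∈ D ∧ R (connectedComponentIn D x) (connectedComponentIn D (-x))}, ?_,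
    fun x hx => hx.1, ?_, ?_⟩
  · rw [isOpen_iff_mem_nhds]
    rintro x ⟨hx, hR⟩
    refine Filter.mem_of_superset
      ((hD.connectedComponentIn (x := x)).mem_nhds (mem_connectedComponentIn hx)) ?_
    intro y hy
    refine ⟨connectedComponentIn_subset _ _ hy, ?_⟩
    rw [← connectedComponentIn_eq hy, ← connectedComponentIn_eq (hcn x hx y hy)]
    exact hR
  · rintro x ⟨hx, hR⟩ ⟨hx', hR'⟩
    rw [neg_neg] at hR'
    exact asymm_of WellOrderingRel hR hR'
  · intro x hx
    have hne : connectedComponentIn D x ≠ connectedComponentIn D (-x) := by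
      intro h
      apply hno x hx
      rw [h]
      exact mem_connectedComponentIn (hsymm x hx)
    rcases trichotomous_of WellOrderingRel (connectedComponentIn D x)
      (connectedComponentIn D (-x)) with h | h | h
    · exact Or.inl ⟨hx, h⟩
    · exact absurd h hne
    · exact Or.inr ⟨hsymm x hx, by rw [neg_neg]; exact h⟩

end
end SBU

/-- signed Borsuk–Ulam, open form: for every cover of the sphere `S^d` by `d`
antipodally symmetric sets `C_1,…,C_d`, each open in `S^d`, some `C_i` contains a pair of
antipodal points lying in the same connected component of `C_i`. -/
theorem signed_borsuk_ulam_open (d : ℕ)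
    (C : Fin d → Set (EuclideanSpace ℝ (Fin (d + 1))))
    (hsub : ∀ i, C i ⊆ Metric.sphere (0 : EuclideanSpace ℝ (Fin (d + 1))) 1)
    (hopen : ∀ i, ∃ U : Set (EuclideanSpace ℝ (Fin (d + 1))), IsOpen U ∧
        C i = U ∩ Metric.sphere (0 : EuclideanSpace ℝ (Fin (d + 1))) 1)
    (hsymm : ∀ i, ∀ x ∈ C i, -x ∈ C i)
    (hcover : Metric.sphere (0 : EuclideanSpace ℝ (Fin (d + 1))) 1 ⊆ ⋃ i, C i) :
    ∃ i, ∃ x ∈ C i, -x ∈ connectedComponentIn (C i) x := by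
  by_contra hcon
  push Not at hcon
  let nz : EuclideanSpace ℝ (Fin (d + 1)) → EuclideanSpace ℝ (Fin (d + 1)) := fun x => ‖x‖⁻¹ • x
  have hnz : ContinuousOn nz {x | x ≠ 0} := by
    refine ContinuousOn.smul (ContinuousOn.inv₀ continuous_norm.continuousOn ?_) continuousOn_id
    intro x hx
    exact norm_ne_zero_iff.mpr hx
  have hnneg : ∀ x, nz (-x) = - nz x := by intro x; simp [nz]
  have hns : ∀ x, x ≠ 0 → nz x ∈ Metric.sphere (0 : EuclideanSpace ℝ (Fin (d + 1))) 1 := by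
    intro x hx
    simp only [nz, mem_sphere_zero_iff_norm, norm_smul, norm_inv, norm_norm]
    exact inv_mul_cancel₀ (norm_ne_zero_iff.mpr hx)
  let D : Fin d → Set (EuclideanSpace ℝ (Fin (d + 1))) := fun i => {x | x ≠ 0 ∧ nz x ∈ C i}
  have hDo : ∀ i, IsOpen (D i) := by
    intro i
    obtain ⟨U, hU, hUC⟩ := hopen i
    have h1 := hnz.isOpen_inter_preimage isOpen_ne hU
    convert h1 using 1
    ext x
    simp only [D, Set.mem_setOf_eq, Set.mem_inter_iff, Set.mem_preimage, hUC]
    constructor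
    · rintro ⟨h, h2, _⟩; exact ⟨h, h2⟩
    · rintro ⟨h, h2⟩; exact ⟨h, h2, hns x h⟩
  have hDs : ∀ i, ∀ x ∈ D i, -x ∈ D i := by
    rintro i x ⟨h1, h2⟩
    refine ⟨neg_ne_zero.mpr h1, ?_⟩
    rw [hnneg]
    exact hsymm i _ h2
  have hDn : ∀ i, ∀ x ∈ D i, -x ∉ connectedComponentIn (D i) x := by
    intro i x hx hmem
    apply hcon i (nz x) hx.2
    have h1 : IsPreconnected (nz '' connectedComponentIn (D i) x) :=
      isPreconnected_connectedComponentIn.image _ (hnz.mono (fun y hy =>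
        (connectedComponentIn_subset _ _ hy).1))
    have h2 : nz '' connectedComponentIn (D i) x ⊆ connectedComponentIn (C i) (nz x) := by
      refine h1.subset_connectedComponentIn ⟨x, mem_connectedComponentIn hx, rfl⟩ ?_
      rintro _ ⟨z, hz, rfl⟩
      exact (connectedComponentIn_subset _ _ hz).2
    rw [← hnneg]
    exact h2 ⟨-x, hmem, rfl⟩
  choose A hAo hAD hAn hAc using fun i => SBU.split (D i) (hDo i) (hDs i) (hDn i)
  have hpos : ∀ i x, x ∈ A i → 0 < Metric.infDist x (A i)ᶜ := by
    intro i x hx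
    have h0 : (A i)ᶜ.Nonempty := ⟨0, fun h => (hAD i h).1 rfl⟩
    exact ((hAo i).isClosed_compl.notMem_iff_infDist_pos h0).mp (by simpa using hx)
  have hzero : ∀ i x, x ∉ A i → Metric.infDist x (A i)ᶜ = 0 := by
    intro i x hx
    exact Metric.infDist_zero_of_mem hx
  refine SBU.borsuk_ulam d
    (fun x i => Metric.infDist x (A i)ᶜ - Metric.infDist (-x) (A i)ᶜ) ?_ ?_ ?_
  · refine continuous_pi (fun i => ?_)
    exact (Metric.continuous_infDist_pt _).sub
      ((Metric.continuous_infDist_pt _).comp continuous_neg)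
  · intro x
    funext i
    simp
  · intro x hx h
    obtain ⟨i, hi⟩ := Set.mem_iUnion.mp (hcover (hns x hx))
    have hi2 := congrFun h i
    simp only [Pi.zero_apply] at hi2
    rcases hAc i x ⟨hx, hi⟩ with h1 | h1
    · have h2 := hpos i x h1
      rw [hzero i (-x) (hAn i x h1)] at hi2
      linarith
    · have h2 := hpos i (-x) h1
      have h3 := hAn i (-x) h1
      rw [neg_neg] at h3
      rw [hzero i x h3] at hi2
      linarith
end

section
/- For all n ≥ k ≥ 1, χ(ŜK(n,k)⁻) = χ(ŜS(n,k)⁻) = n−k+1, where ŜK(n,k) and ŜS(n,k) are the subgraphs of KS(n,k) and SS(n,k) induced by vertices whose smallest-absolute-value element is positive, and G⁻ denotes the graph on the same vertices whose edges are the negative edges. -/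
/-- The (ordinary) chromatic number of a graph given by its adjacency relation. -/
noncomputable def chromNum {V : Type*} (adj : V → V → Prop) : ℕ :=
  sInf {m : ℕ | ∃ c : V → Fin m, ∀ u v : V, adj u v → c u ≠ c v}

/-- Vertices of the half signed Kneser graph `ŜK(n,k)`: signed `k`-subsets whose
smallest-absolute-value element is positive. -/
def HKSVertex (n k : ℕ) : Type := {A : Finset ℤ // IsSignedKSubset n k A ∧ FirstPos A}

/-- Vertices of the half signed Schrijver graph `ŜS(n,k)`. -/
def HSSVertex (n k : ℕ) : Type :=
  {A : Finset ℤ // IsSignedKSubset n k A ∧ IsAlternating A ∧ FirstPos A}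

/-- Negation of an encoded label: `2j+1` encodes `+j`, `2j` encodes `-j`. -/
def tkNeg (t : ℕ) : ℕ := 4 * (t / 2) + 1 - t

/-- `1` if the parities alternate starting with `b`. -/
def tkAlt : Bool → List ℕ → ZMod 2
  | _, [] => 1
  | b, a :: t => if decide (a % 2 = 1) = b then tkAlt (!b) t else 0

theorem tkAlt_cons (b : Bool) (a : ℕ) (t : List ℕ) :
    tkAlt b (a :: t) = if decide (a % 2 = 1) = b then tkAlt (!b) t else 0 := rfl

theorem tkAlt_sum (l : List ℕ) (hl : l.Pairwise (· ≤ ·)) (b : Bool) :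
    (l.map (fun a => tkAlt b (l.erase a))).sum = tkAlt true l + tkAlt false l := by
  induction l generalizing b with
  | nil => simp [tkAlt]; decide
  | cons a t ih =>
    have ht := (List.pairwise_cons.1 hl).2
    have ha := (List.pairwise_cons.1 hl).1
    have key : ∀ x ∈ t, (a :: t).erase x = a :: t.erase x := by
      intro x hx
      by_cases hxa : x = a
      · subst hxa
        rw [List.erase_cons_head]
        apply List.Perm.eq_of_pairwise (le := (· ≤ ·)) (fun _ _ _ _ h1 h2 => le_antisymm h1 h2) ht
        · refine List.pairwise_cons.2 ⟨fun y hy => ha y (List.mem_of_mem_erase hy), ht.sublist List.erase_sublist⟩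
        · exact List.perm_cons_erase hx
      · rw [List.erase_cons_tail]
        simpa using fun h => hxa h.symm
    rw [List.map_cons, List.sum_cons, List.erase_cons_head]
    have e : (t.map (fun x => tkAlt b ((a :: t).erase x))) =
        t.map (fun x => if decide (a % 2 = 1) = b then tkAlt (!b) (t.erase x) else 0) := by
      apply List.map_congr_left
      intro x hx
      rw [key x hx, tkAlt_cons]
    rw [e]
    have c2 : ∀ x : ZMod 2, x + x = 0 := by decide
    rw [tkAlt_cons, tkAlt_cons]
    by_cases h : a % 2 = 1 <;> cases b <;> simp [h, ih ht] <;> grind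

/-- Alternation of a multiset of labels. -/
def tkF (b : Bool) (s : Multiset ℕ) : ZMod 2 := tkAlt b (s.sort (· ≤ ·))

theorem tkSort_erase (s : Multiset ℕ) (a : ℕ) :
    (s.erase a).sort (· ≤ ·) = (s.sort (· ≤ ·)).erase a := by
  apply List.Perm.eq_of_pairwise (le := (· ≤ ·)) (fun _ _ _ _ h1 h2 => le_antisymm h1 h2)
  · exact Multiset.pairwise_sort _ _
  · exact (Multiset.pairwise_sort s (· ≤ ·)).sublist List.erase_sublist
  · rw [← Multiset.coe_eq_coe, Multiset.sort_eq, ← Multiset.coe_erase, Multiset.sort_eq]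

theorem tkF_sum (s : Multiset ℕ) (b : Bool) :
    (s.map (fun a => tkF b (s.erase a))).sum = tkF true s + tkF false s := by
  have := tkAlt_sum (s.sort (· ≤ ·)) (Multiset.pairwise_sort _ _) b
  unfold tkF
  simp_rw [tkSort_erase]
  rw [← this]
  conv_lhs => enter [1, 2]; rw [← Multiset.sort_eq s (· ≤ ·)]
  simp only [Multiset.map_coe, Multiset.sum_coe]

theorem tkAlt_neg (l : List ℕ) (b : Bool) : tkAlt b (l.map tkNeg) = tkAlt (!b) l := by
  induction l generalizing b with
  | nil => rfl
  | cons a t ih =>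
    rw [List.map_cons, tkAlt_cons, tkAlt_cons, ih]
    have : tkNeg a % 2 = 1 ↔ ¬ (a % 2 = 1) := by unfold tkNeg; omega
    by_cases h : a % 2 = 1 <;> cases b <;> simp [this, h]

theorem tkF_neg (s : Multiset ℕ) (hs : ∀ a ∈ s, ∀ b ∈ s, a / 2 = b / 2 → a = b) (b : Bool) :
    tkF b (s.map tkNeg) = tkF (!b) s := by
  unfold tkF
  rw [← tkAlt_neg]
  congr 1
  apply List.Perm.eq_of_pairwise (le := (· ≤ ·)) (fun _ _ _ _ h1 h2 => le_antisymm h1 h2)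
  · exact Multiset.pairwise_sort _ _
  · rw [List.pairwise_map]
    refine (Multiset.pairwise_sort s (· ≤ ·)).imp_of_mem ?_
    intro x y hx hy hxy
    have := hs x ((Multiset.mem_sort _).1 hx) y ((Multiset.mem_sort _).1 hy)
    unfold tkNeg
    omega
  · rw [← Multiset.coe_eq_coe, Multiset.sort_eq, ← Multiset.map_coe, Multiset.sort_eq]

theorem tkAlt_nodup (l : List ℕ) (hl : l.Pairwise (· ≤ ·)) (b : Bool) (h : tkAlt b l ≠ 0) :
    l.Nodup := by
  induction l generalizing b with
  | nil => simp
  | cons a t ih =>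
    rw [tkAlt_cons] at h
    split_ifs at h with hb
    swap
    · exact absurd rfl h
    have ht := (List.pairwise_cons.1 hl).2
    have ha := (List.pairwise_cons.1 hl).1
    refine List.nodup_cons.2 ⟨?_, ih ht _ h⟩
    intro hat
    cases t with
    | nil => simp at hat
    | cons c r =>
      rw [tkAlt_cons] at h
      split_ifs at h with hc
      swap
      · exact absurd rfl h
      have h1 := ha c (by simp)
      have h2 : c ≤ a := by
        rcases List.mem_cons.1 hat with h | h
        · omega
        · exact (List.pairwise_cons.1 ht).1 a h
      have : a = c := le_antisymm h1 h2
      subst this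
      rw [hb] at hc
      cases b <;> simp at hc

theorem tkF_nodup (s : Multiset ℕ) (b : Bool) (h : tkF b s ≠ 0) : s.Nodup := by
  have := tkAlt_nodup _ (Multiset.pairwise_sort s (· ≤ ·)) b h
  rw [← Multiset.coe_nodup, Multiset.sort_eq] at this
  exact this

/-- The signed integer `±(v+1)`. -/
def tkSv {N : ℕ} (v : Fin N) (b : Bool) : ℤ := if b then (v.val : ℤ) + 1 else -((v.val : ℤ) + 1)

/-- The `i`-th set in the maximal chain. -/
def tkPre {N : ℕ} (σ : Equiv.Perm (Fin N) × (Fin N → Bool)) (i : ℕ) : Finset ℤ :=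
  (Finset.univ.filter (fun j : Fin N => j.val ≤ i)).image (fun j => tkSv (σ.1 j) (σ.2 (σ.1 j)))

/-- consistent signed sets. -/
def TkCons (n : ℕ) (X : Finset ℤ) : Prop :=
  (∀ a ∈ X, a ≠ 0 ∧ a.natAbs ≤ n) ∧ ∀ a ∈ X, -a ∉ X

/-- The hypotheses of the octahedral Tucker lemma. -/
structure TkLab (N : ℕ) (lam : Finset ℤ → ℕ) : Prop where
  anti : ∀ X, X.Nonempty → TkCons N X → lam (X.image (fun a => -a)) = tkNeg (lam X)
  comp : ∀ X Y, X ⊆ Y → X.Nonempty → TkCons N Y → lam X / 2 = lam Y / 2 → lam X = lam Y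

theorem tkSv_neg {N : ℕ} (v : Fin N) (b : Bool) : tkSv v (!b) = - tkSv v b := by
  cases b <;> simp [tkSv]

theorem tkPre_cons {N : ℕ} (σ : Equiv.Perm (Fin N) × (Fin N → Bool)) (i : ℕ) :
    TkCons N (tkPre σ i) := by
  constructor
  · intro a ha
    obtain ⟨j, hj, rfl⟩ := Finset.mem_image.1 ha
    have := (σ.1 j).isLt
    unfold tkSv
    split_ifs <;> constructor <;> omega
  · intro a ha hb
    obtain ⟨j, hj, rfl⟩ := Finset.mem_image.1 ha
    obtain ⟨i, hi, h⟩ := Finset.mem_image.1 hb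
    have : σ.1 i = σ.1 j := by
      apply Fin.ext
      unfold tkSv at h
      split_ifs at h <;> omega
    rw [this] at h
    unfold tkSv at h
    split_ifs at h <;> omega

theorem tkPre_mono {N : ℕ} (σ : Equiv.Perm (Fin N) × (Fin N → Bool)) {i j : ℕ} (h : i ≤ j) :
    tkPre σ i ⊆ tkPre σ j := by
  apply Finset.image_subset_image
  intro x
  simp only [Finset.mem_filter, Finset.mem_univ, true_and]
  omega

theorem tkPre_nonempty {N : ℕ} (hN : 0 < N) (σ : Equiv.Perm (Fin N) × (Fin N → Bool)) (i : ℕ) :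
    (tkPre σ i).Nonempty := by
  refine Finset.Nonempty.image ⟨⟨0, hN⟩, ?_⟩ _
  simp

theorem tkPre_congr {N : ℕ} (σ τ : Equiv.Perm (Fin N) × (Fin N → Bool)) (i : ℕ)
    (h : ∀ j : Fin N, j.val ≤ i → σ.1 j = τ.1 j ∧ σ.2 (σ.1 j) = τ.2 (σ.1 j)) :
    tkPre σ i = tkPre τ i := by
  apply Finset.image_congr
  intro j hj
  have := h j (by simpa using hj)
  simp only
  rw [this.2, this.1]

theorem tkPre_swap {N : ℕ} (σ : Equiv.Perm (Fin N) × (Fin N → Bool)) (a b : Fin N)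
    (hab : b.val = a.val + 1) (i : ℕ) (hi : i ≠ a.val) :
    tkPre (σ.1 * Equiv.swap a b, σ.2) i = tkPre σ i := by
  have hset : (Finset.univ.filter (fun j : Fin N => j.val ≤ i)).image (Equiv.swap a b) =
      Finset.univ.filter (fun j : Fin N => j.val ≤ i) := by
    ext x
    simp only [Finset.mem_image, Finset.mem_filter, Finset.mem_univ, true_and]
    have hx : ∀ x : Fin N, x.val ≤ i → (Equiv.swap a b x).val ≤ i := by
      intro x hx
      rw [Equiv.swap_apply_def]
      split_ifs with h1 h2
      · subst h1; omega
      · subst h2; omega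
      · exact hx
    constructor
    · rintro ⟨y, hy, rfl⟩
      exact hx y hy
    · intro h
      exact ⟨Equiv.swap a b x, hx x h, by simp⟩
  unfold tkPre
  conv_rhs => rw [← hset, Finset.image_image]
  rfl

/-- The labels of a chain. -/
def tkLabs {N : ℕ} (lam : Finset ℤ → ℕ) (σ : Equiv.Perm (Fin N) × (Fin N → Bool)) (d : ℕ) :
    Multiset ℕ := (Multiset.range d).map (fun i => lam (tkPre σ i))

/-- The chains of the `d`-dimensional subsphere. -/
def tkC (N d : ℕ) : Finset (Equiv.Perm (Fin N) × (Fin N → Bool)) :=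
  Finset.univ.filter (fun σ => ∀ j : Fin N, d ≤ j.val → σ.1 j = j ∧ σ.2 j = true)

theorem mem_tkC {N d : ℕ} (σ : Equiv.Perm (Fin N) × (Fin N → Bool)) :
    σ ∈ tkC N d ↔ ∀ j : Fin N, d ≤ j.val → σ.1 j = j ∧ σ.2 j = true := by
  simp [tkC]

theorem tkC_lt {N d : ℕ} {σ : Equiv.Perm (Fin N) × (Fin N → Bool)} (h : σ ∈ tkC N d)
    (j : Fin N) (hj : j.val < d) : (σ.1 j).val < d := by
  by_contra hc
  have := ((mem_tkC σ).1 h (σ.1 j) (by omega)).1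
  have := σ.1.injective this
  rw [this] at hc
  exact hc hj

theorem tkLabs_comp {N : ℕ} {lam : Finset ℤ → ℕ} (hl : TkLab N lam) (hN : 0 < N)
    (σ : Equiv.Perm (Fin N) × (Fin N → Bool)) (i j : ℕ)
    (h : lam (tkPre σ i) / 2 = lam (tkPre σ j) / 2) : lam (tkPre σ i) = lam (tkPre σ j) := by
  rcases le_total i j with hij | hij
  · exact hl.comp _ _ (tkPre_mono σ hij) (tkPre_nonempty hN σ i) (tkPre_cons σ j) h
  · exact (hl.comp _ _ (tkPre_mono σ hij) (tkPre_nonempty hN σ j) (tkPre_cons σ i) h.symm).symm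

/-- Antipode on the first `d` coordinates. -/
def tkAnti {N : ℕ} (d : ℕ) (σ : Equiv.Perm (Fin N) × (Fin N → Bool)) :
    Equiv.Perm (Fin N) × (Fin N → Bool) :=
  (σ.1, fun j => if j.val < d then !(σ.2 j) else σ.2 j)

theorem tkAnti_anti {N d : ℕ} (σ : Equiv.Perm (Fin N) × (Fin N → Bool)) :
    tkAnti d (tkAnti d σ) = σ := by
  unfold tkAnti
  ext j
  · rfl
  · simp only
    split_ifs <;> simp

theorem tkAnti_mem {N d : ℕ} {σ : Equiv.Perm (Fin N) × (Fin N → Bool)} (h : σ ∈ tkC N d) :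
    tkAnti d σ ∈ tkC N d := by
  rw [mem_tkC] at *
  intro j hj
  have := h j hj
  refine ⟨this.1, ?_⟩
  simp [tkAnti, not_lt.2 hj, this.2]

theorem tkPre_anti {N d : ℕ} {σ : Equiv.Perm (Fin N) × (Fin N → Bool)} (h : σ ∈ tkC N d)
    (i : ℕ) (hi : i < d) : tkPre (tkAnti d σ) i = (tkPre σ i).image (fun a => -a) := by
  unfold tkPre
  rw [Finset.image_image]
  apply Finset.image_congr
  intro j hj
  have hj : j.val ≤ i := by simpa using hj
  have := tkC_lt h j (by omega)
  simp only [tkAnti, this, if_true, Function.comp, tkSv_neg]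

theorem tkF_anti {N d : ℕ} {lam : Finset ℤ → ℕ} (hl : TkLab N lam) (hN : 0 < N)
    {σ : Equiv.Perm (Fin N) × (Fin N → Bool)} (h : σ ∈ tkC N d) (b : Bool) :
    tkF b (tkLabs lam (tkAnti d σ) d) = tkF (!b) (tkLabs lam σ d) := by
  rw [← tkF_neg]
  · congr 1
    unfold tkLabs
    rw [Multiset.map_map]
    apply Multiset.map_congr rfl
    intro i hi
    rw [Function.comp, tkPre_anti h i (Multiset.mem_range.1 hi),
      hl.anti _ (tkPre_nonempty hN σ i) (tkPre_cons σ i)]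
  · unfold tkLabs
    intro x hx y hy hxy
    obtain ⟨i, -, rfl⟩ := Multiset.mem_map.1 hx
    obtain ⟨j, -, rfl⟩ := Multiset.mem_map.1 hy
    exact tkLabs_comp hl hN σ i j hxy

/-- Labels of a facet. -/
def tkFac {N : ℕ} (lam : Finset ℤ → ℕ) (σ : Equiv.Perm (Fin N) × (Fin N → Bool)) (d i : ℕ) :
    Multiset ℕ := ((Multiset.range d).erase i).map (fun i => lam (tkPre σ i))

theorem tkFac_congr {N : ℕ} (lam : Finset ℤ → ℕ) (σ τ : Equiv.Perm (Fin N) × (Fin N → Bool))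
    (d i : ℕ) (h : ∀ j < d, j ≠ i → tkPre σ j = tkPre τ j) : tkFac lam σ d i = tkFac lam τ d i := by
  apply Multiset.map_congr rfl
  intro j hj
  rw [(Multiset.nodup_range d).mem_erase_iff] at hj
  rw [h j (Multiset.mem_range.1 hj.2) hj.1]

theorem tkF_fac {N : ℕ} (lam : Finset ℤ → ℕ) (σ : Equiv.Perm (Fin N) × (Fin N → Bool)) (d : ℕ) :
    tkF true (tkLabs lam σ d) + tkF false (tkLabs lam σ d) =
      ∑ i ∈ Finset.range d, tkF true (tkFac lam σ d i) := by
  rw [← tkF_sum _ true, Finset.sum_eq_multiset_sum, Finset.range_val]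
  unfold tkLabs
  rw [Multiset.map_map]
  congr 1
  apply Multiset.map_congr rfl
  intro i hi
  unfold tkFac
  rw [Function.comp, Multiset.map_erase_of_mem _ _ hi]

theorem tk_count {N : ℕ} {lam : Finset ℤ → ℕ} (hl : TkLab N lam) (d : ℕ) (hd : d ≤ N) :
    ∑ σ ∈ tkC N d, tkF true (tkLabs lam σ d) = 1 := by
  have c2 : ∀ x : ZMod 2, x + x = 0 := by decide
  induction d with
  | zero =>
    have : tkC N 0 = {(1, fun _ => true)} := by
      ext σ
      rw [mem_tkC, Finset.mem_singleton]
      constructor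
      · intro h
        refine Prod.ext (Equiv.ext fun j => (h j (Nat.zero_le _)).1) (funext fun j => (h j (Nat.zero_le _)).2)
      · rintro rfl j _
        simp
    rw [this, Finset.sum_singleton]
    simp [tkLabs, tkF, tkAlt]
  | succ d ih =>
    have hN : 0 < N := by omega
    let D : Fin N := ⟨d, by omega⟩
    have s1 := Finset.sum_filter_add_sum_filter_not (tkC N (d+1)) (fun σ => σ.2 D = true)
      (fun σ => tkF true (tkLabs lam σ (d+1)))
    rw [← s1]
    have s2 : ∑ σ ∈ tkC N (d+1) with ¬ (σ.2 D = true), tkF true (tkLabs lam σ (d+1)) =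
        ∑ σ ∈ tkC N (d+1) with σ.2 D = true, tkF false (tkLabs lam σ (d+1)) := by
      symm
      apply Finset.sum_bij' (fun σ _ => tkAnti (d+1) σ) (fun σ _ => tkAnti (d+1) σ)
      · intro σ hσ
        rw [Finset.mem_filter] at *
        refine ⟨tkAnti_mem hσ.1, ?_⟩
        simpa [tkAnti, D] using hσ.2
      · intro σ hσ
        rw [Finset.mem_filter] at *
        refine ⟨tkAnti_mem hσ.1, ?_⟩
        simpa [tkAnti, D] using hσ.2
      · intro σ _; exact tkAnti_anti σ
      · intro σ _; exact tkAnti_anti σ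
      · intro σ hσ
        rw [tkF_anti hl hN (Finset.mem_filter.1 hσ).1]
        rfl
    rw [s2, ← Finset.sum_add_distrib]
    simp_rw [tkF_fac]
    rw [Finset.sum_comm, Finset.sum_range_succ]
    have z : ∀ i ∈ Finset.range d, ∑ σ ∈ tkC N (d+1) with σ.2 D = true,
        tkF true (tkFac lam σ (d+1) i) = 0 := by
      intro i hi
      have hi : i < d := Finset.mem_range.1 hi
      let a : Fin N := ⟨i, by omega⟩
      let b : Fin N := ⟨i+1, by omega⟩
      have hab : a ≠ b := by simp [a, b]
      apply Finset.sum_involution (fun σ _ => (σ.1 * Equiv.swap a b, σ.2))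
      · intro σ hσ
        rw [tkFac_congr lam (σ.1 * Equiv.swap a b, σ.2) σ, c2]
        intro j hj hji
        exact tkPre_swap σ a b rfl j hji
      · intro σ hσ _ h
        have h1 := congrArg Prod.fst h
        have h2 := congrArg (fun f : Equiv.Perm (Fin N) => f a) h1
        simp only [Equiv.Perm.mul_apply, Equiv.swap_apply_left] at h2
        exact hab (σ.1.injective h2).symm
      · intro σ hσ
        rw [Finset.mem_filter, mem_tkC] at *
        refine ⟨fun j hj => ⟨?_, (hσ.1 j hj).2⟩, hσ.2⟩
        rw [Equiv.Perm.mul_apply, Equiv.swap_apply_of_ne_of_ne, (hσ.1 j hj).1]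
        · intro h; have := congrArg Fin.val h; simp [a] at this; omega
        · intro h; have := congrArg Fin.val h; simp [b] at this; omega
      · intro σ hσ
        ext j <;> simp [mul_assoc]
    rw [Finset.sum_eq_zero z, zero_add, ← Finset.sum_filter_add_sum_filter_not _ (fun σ => σ.1 D = D)]
    have z2 : ∑ σ ∈ (tkC N (d+1)).filter (fun σ => σ.2 D = true) with ¬ (σ.1 D = D),
        tkF true (tkFac lam σ (d+1) d) = 0 := by
      apply Finset.sum_involution (fun (σ : Equiv.Perm (Fin N) × (Fin N → Bool)) _ => (σ.1, Function.update σ.2 (σ.1 D) (!(σ.2 (σ.1 D)))))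
      · intro σ hσ
        rw [tkFac_congr lam (σ.1, Function.update σ.2 (σ.1 D) (!(σ.2 (σ.1 D)))) σ, c2]
        intro j hj hji
        apply tkPre_congr
        intro r hr
        refine ⟨rfl, ?_⟩
        simp only
        rw [Function.update_of_ne]
        intro h
        have := congrArg Fin.val (σ.1.injective h)
        simp [D] at this
        omega
      · intro σ hσ _ h
        have h1 := congrArg Prod.snd h
        have h2 := congrFun h1 (σ.1 D)
        simp at h2
      · intro σ hσ
        rw [Finset.mem_filter, Finset.mem_filter] at *
        have hlt := tkC_lt hσ.1.1 D (by simp [D])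
        rw [mem_tkC] at *
        refine ⟨⟨fun j hj => ⟨(hσ.1.1 j hj).1, ?_⟩, ?_⟩, hσ.2⟩
        · simp only
          rw [Function.update_of_ne]
          · exact (hσ.1.1 j hj).2
          · rintro rfl; omega
        · simp only
          rw [Function.update_of_ne]
          · exact hσ.1.2
          · exact fun h => hσ.2 h.symm
      · intro σ hσ
        simp
    rw [z2, add_zero, ← ih (by omega)]
    apply Finset.sum_congr
    · ext σ
      rw [Finset.mem_filter, Finset.mem_filter, mem_tkC, mem_tkC]
      constructor
      · rintro ⟨⟨h1, h2⟩, h3⟩ j hj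
        by_cases hjd : j = D
        · subst hjd; exact ⟨h3, h2⟩
        · refine h1 j ?_
          have : j.val ≠ d := fun h => hjd (Fin.ext h)
          omega
      · intro h
        exact ⟨⟨fun j hj => h j (by omega), (h D le_rfl).2⟩, (h D le_rfl).1⟩
    · intro σ _
      congr 1
      unfold tkFac tkLabs
      congr 1
      rw [Multiset.range_succ, Multiset.erase_cons_head]

theorem tucker_s17 {N m : ℕ} {lam : Finset ℤ → ℕ} (hl : TkLab N lam)
    (hb : ∀ X, X.Nonempty → TkCons N X → lam X < 2 * m) : N ≤ m := by
  rcases Nat.eq_zero_or_pos N with h0 | hN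
  · omega
  have h := tk_count hl N le_rfl
  obtain ⟨σ, -, hσ⟩ := Finset.exists_ne_zero_of_sum_ne_zero (by rw [h]; decide)
  have hn := tkF_nodup _ _ hσ
  unfold tkLabs at hn
  have inj := Multiset.inj_on_of_nodup_map hn
  have : (Finset.range N).card ≤ (Finset.range m).card := by
    apply Finset.card_le_card_of_injOn (fun i => lam (tkPre σ i) / 2)
    · intro i hi
      have := hb _ (tkPre_nonempty hN σ i) (tkPre_cons σ i)
      simp
      omega
    · intro i hi j hj hij
      refine inj i ?_ j ?_ (tkLabs_comp hl hN σ i j hij)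
      · simpa using hi
      · simpa using hj
  simpa using this

theorem tkNegImg_mem {A : Finset ℤ} {a : ℤ} : a ∈ A.image (fun a => -a) ↔ -a ∈ A := by
  simp only [Finset.mem_image]
  constructor
  · rintro ⟨b, hb, rfl⟩; simpa using hb
  · intro h; exact ⟨-a, h, by simp⟩

theorem tkNegImg_negImg (A : Finset ℤ) : (A.image (fun a => -a)).image (fun a => -a) = A := by
  ext a; rw [tkNegImg_mem, tkNegImg_mem, neg_neg]

theorem tkNegImg_card (A : Finset ℤ) : (A.image (fun a => -a)).card = A.card :=
  Finset.card_image_of_injective _ neg_injective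

theorem TkCons.neg {n : ℕ} {A : Finset ℤ} (h : TkCons n A) : TkCons n (A.image (fun a => -a)) := by
  constructor
  · intro a ha
    have := h.1 _ (tkNegImg_mem.1 ha)
    omega
  · intro a ha hb
    rw [tkNegImg_mem] at *
    exact h.2 _ ha hb

theorem TkCons.subset {n : ℕ} {A B : Finset ℤ} (h : TkCons n B) (hAB : A ⊆ B) : TkCons n A :=
  ⟨fun a ha => h.1 a (hAB ha), fun a ha hb => h.2 a (hAB ha) (hAB hb)⟩

theorem TkCons.eq {n : ℕ} {A : Finset ℤ} (h : TkCons n A) {a b : ℤ} (ha : a ∈ A) (hb : b ∈ A)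
    (hab : a.natAbs = b.natAbs) : a = b := by
  rcases Int.natAbs_eq_natAbs_iff.1 hab with h1 | h1
  · exact h1
  · subst h1
    exact absurd ha (h.2 b hb)

theorem tkMin {A : Finset ℤ} (h : A.Nonempty) : ∃ a ∈ A, ∀ b ∈ A, a.natAbs ≤ b.natAbs :=
  Finset.exists_min_image A Int.natAbs h

theorem tkFirst_iff {n : ℕ} {A : Finset ℤ} (h : TkCons n A) {a : ℤ} (ha : a ∈ A)
    (hm : ∀ b ∈ A, a.natAbs ≤ b.natAbs) : FirstPos A ↔ 0 < a := by
  constructor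
  · intro hf; exact hf a ha hm
  · intro hp b hb hbm
    rw [h.eq hb ha (le_antisymm (hbm a ha) (hm b hb))]
    exact hp

theorem tkFirst_neg {n : ℕ} {A : Finset ℤ} (h : TkCons n A) (hA : A.Nonempty) :
    FirstPos (A.image (fun a => -a)) ↔ ¬ FirstPos A := by
  obtain ⟨a, ha, hm⟩ := tkMin hA
  rw [tkFirst_iff h ha hm, tkFirst_iff h.neg (a := -a) (tkNegImg_mem.2 (by simpa using ha))]
  · have := (h.1 a ha).1; omega
  · intro b hb
    have := hm _ (tkNegImg_mem.1 hb)
    omega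

theorem IsAlternating.neg' {n : ℕ} {A : Finset ℤ} (h : TkCons n A) (hA : IsAlternating A) :
    IsAlternating (A.image (fun a => -a)) := by
  intro a ha b hb hab hc
  rw [tkNegImg_mem] at ha hb
  have := hA (-a) ha (-b) hb (by omega) (by
    intro c hcA
    have := hc (-c) (tkNegImg_mem.2 (by simpa using hcA))
    omega)
  have h1 := (h.1 _ ha).1
  have h2 := (h.1 _ hb).1
  omega

theorem tkAlt_insert {n : ℕ} {Y A : Finset ℤ} (h : TkCons n Y) (hAY : A ⊆ Y) (hne : A.Nonempty)
    (hA : IsAlternating A) {y : ℤ} (hy : y ∈ Y) (hm : ∀ b ∈ Y, y.natAbs ≤ b.natAbs)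
    (hs : ¬ (FirstPos A ↔ 0 < y)) : IsAlternating (insert y A) ∧ (insert y A).card = A.card + 1 := by
  have hyA : y ∉ A := by
    intro hyA
    exact hs (tkFirst_iff (h.subset hAY) hyA (fun b hb => hm b (hAY hb)))
  have hlt : ∀ a ∈ A, y.natAbs < a.natAbs := by
    intro a ha
    refine lt_of_le_of_ne (hm a (hAY ha)) ?_
    intro e
    exact hyA (h.eq hy (hAY ha) e ▸ ha)
  refine ⟨?_, Finset.card_insert_of_notMem hyA⟩
  intro a ha b hb hab hc
  rcases Finset.mem_insert.1 hb with rfl | hbA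
  · rcases Finset.mem_insert.1 ha with rfl | ha
    · omega
    · have := hlt a ha; omega
  rcases Finset.mem_insert.1 ha with rfl | ha
  · have hbm : ∀ c ∈ A, b.natAbs ≤ c.natAbs := by
      intro c hcA
      have := hc c (Finset.mem_insert_of_mem hcA)
      have := hlt c hcA
      omega
    rw [tkFirst_iff (h.subset hAY) hbA hbm] at hs
    have := (h.1 _ (hAY hbA)).1
    omega
  · exact hA a ha b hbA hab (fun c hcA => hc c (Finset.mem_insert_of_mem hcA))

open Classical in
/-- Maximal size of an alternating subset. -/
noncomputable def tkAltNum (X : Finset ℤ) : ℕ := (X.powerset.filter IsAlternating).sup Finset.card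

theorem tkAltNum_le {X A : Finset ℤ} (h : A ⊆ X) (hA : IsAlternating A) : A.card ≤ tkAltNum X := by
  classical
  unfold tkAltNum
  exact Finset.le_sup (f := Finset.card)
    (Finset.mem_filter.2 ⟨Finset.mem_powerset.2 h, hA⟩)

theorem tkAltNum_exists (X : Finset ℤ) : ∃ A ⊆ X, IsAlternating A ∧ A.card = tkAltNum X := by
  classical
  have hne : (X.powerset.filter IsAlternating).Nonempty :=
    ⟨∅, Finset.mem_filter.2 ⟨by simp, by intro a ha; simp at ha⟩⟩
  obtain ⟨A, hA, h⟩ := Finset.exists_mem_eq_sup _ hne Finset.card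
  rw [Finset.mem_filter, Finset.mem_powerset] at hA
  refine ⟨A, hA.1, hA.2, ?_⟩
  unfold tkAltNum
  rw [h]

theorem tkAltNum_mono {X Y : Finset ℤ} (h : X ⊆ Y) : tkAltNum X ≤ tkAltNum Y := by
  obtain ⟨A, hA, h1, h2⟩ := tkAltNum_exists X
  rw [← h2]
  exact tkAltNum_le (hA.trans h) h1

theorem tkAltNum_pos {X : Finset ℤ} (h : X.Nonempty) : 1 ≤ tkAltNum X := by
  obtain ⟨a, ha⟩ := h
  have := tkAltNum_le (X := X) (A := {a}) (by simpa using ha) (by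
    intro b hb c hc hbc
    rw [Finset.mem_singleton] at hb hc
    subst hb; subst hc
    omega)
  simpa using this

theorem tkNegImg_subset {A X : Finset ℤ} (h : A ⊆ X) :
    A.image (fun a => -a) ⊆ X.image (fun a => -a) := Finset.image_subset_image h

theorem tkAltNum_neg_le {n : ℕ} {X : Finset ℤ} (h : TkCons n X) :
    tkAltNum X ≤ tkAltNum (X.image (fun a => -a)) := by
  obtain ⟨A, hA, h1, h2⟩ := tkAltNum_exists X
  rw [← h2, ← tkNegImg_card]
  exact tkAltNum_le (tkNegImg_subset hA) (h1.neg' (h.subset hA))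

theorem tkAltNum_neg {n : ℕ} {X : Finset ℤ} (h : TkCons n X) :
    tkAltNum (X.image (fun a => -a)) = tkAltNum X := by
  apply le_antisymm _ (tkAltNum_neg_le h)
  have := tkAltNum_neg_le h.neg
  rwa [tkNegImg_negImg] at this

theorem tkAltNum_first {n : ℕ} {X Y : Finset ℤ} (hXY : X ⊆ Y) (hX : X.Nonempty) (h : TkCons n Y)
    (he : tkAltNum X = tkAltNum Y) : FirstPos X ↔ FirstPos Y := by
  obtain ⟨A, hA, h1, h2⟩ := tkAltNum_exists X
  have hAne : A.Nonempty := by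
    rw [← Finset.card_pos, h2]; exact tkAltNum_pos hX
  have key : ∀ Z, A ⊆ Z → TkCons n Z → tkAltNum Z = A.card → (FirstPos A ↔ FirstPos Z) := by
    intro Z hAZ hZ hc
    obtain ⟨z, hz, hm⟩ := tkMin (hAne.mono hAZ)
    rw [tkFirst_iff hZ hz hm]
    by_contra hs
    obtain ⟨i1, i2⟩ := tkAlt_insert hZ hAZ hAne h1 hz hm hs
    have := tkAltNum_le (Finset.insert_subset hz hAZ) i1
    omega
  rw [← key X hA (h.subset hXY) h2.symm, ← key Y (hA.trans hXY) h (by omega)]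

/-- A subset has an alternating sub-`k`-set with encoded colour `v`. -/
def TkHas (k : ℕ) (c : Finset ℤ → ℕ) (X : Finset ℤ) (v : ℕ) : Prop :=
  ∃ A ⊆ X, IsAlternating A ∧ A.card = k ∧
    ((FirstPos A ∧ v = 2 * c A + 1) ∨ (¬ FirstPos A ∧ v = 2 * c (A.image (fun a => -a))))

open Classical in
/-- The label. -/
noncomputable def tkLamb (k : ℕ) (c : Finset ℤ → ℕ) (X : Finset ℤ) : ℕ :=
  if h : ∃ v, TkHas k c X v then 2 * (k - 1) + Nat.find h
  else 2 * (tkAltNum X - 1) + if FirstPos X then 1 else 0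

theorem TkHas.neg {n k : ℕ} (hk : 1 ≤ k) {c : Finset ℤ → ℕ} {X : Finset ℤ} (h : TkCons n X) {v : ℕ}
    (hv : TkHas k c X v) : TkHas k c (X.image (fun a => -a)) (tkNeg v) := by
  obtain ⟨A, hA, h1, h2, h3⟩ := hv
  have hne : A.Nonempty := by rw [← Finset.card_pos]; omega
  refine ⟨A.image (fun a => -a), tkNegImg_subset hA, h1.neg' (h.subset hA), by rw [tkNegImg_card, h2], ?_⟩
  rw [tkFirst_neg (h.subset hA) hne, tkNegImg_negImg]
  unfold tkNeg
  rcases h3 with ⟨h3, rfl⟩ | ⟨h3, rfl⟩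
  · right; exact ⟨not_not.2 h3, by omega⟩
  · left; exact ⟨h3, by omega⟩

theorem TkHas.mono {k : ℕ} {c : Finset ℤ → ℕ} {X Y : Finset ℤ} (h : X ⊆ Y) {v : ℕ}
    (hv : TkHas k c X v) : TkHas k c Y v := by
  obtain ⟨A, hA, h1⟩ := hv
  exact ⟨A, hA.trans h, h1⟩


/-- `c` is a proper colouring. -/
def TkProper (n k : ℕ) (c : Finset ℤ → ℕ) : Prop :=
  ∀ A B, TkCons n A → TkCons n B → A.card = k → B.card = k → IsAlternating A → IsAlternating B →
    FirstPos A → FirstPos B → c A = c B → ¬ Disjoint A B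

theorem TkHas.comp {n k : ℕ} (hk : 1 ≤ k) {c : Finset ℤ → ℕ} (hc : TkProper n k c) {Y : Finset ℤ}
    (h : TkCons n Y) {v w : ℕ} (hv : TkHas k c Y v) (hw : TkHas k c Y w) (hvw : v / 2 = w / 2) :
    v = w := by
  have key : ∀ A B, A ⊆ Y → B ⊆ Y → IsAlternating A → IsAlternating B → A.card = k → B.card = k →
      FirstPos A → ¬ FirstPos B → c A ≠ c (B.image (fun a => -a)) := by
    intro A B hA hB a1 a2 c1 c2 f1 f2 he
    have hne : B.Nonempty := by rw [← Finset.card_pos]; omega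
    have := hc A (B.image (fun a => -a)) (h.subset hA) (h.subset hB).neg c1
      (by rw [tkNegImg_card, c2]) a1 (a2.neg' (h.subset hB)) f1
      ((tkFirst_neg (h.subset hB) hne).2 f2) he
    obtain ⟨x, hx, hx2⟩ := Finset.not_disjoint_iff.1 this
    exact h.2 x (hA hx) (hB (tkNegImg_mem.1 hx2))
  obtain ⟨A, hA, h1, h2, h3⟩ := hv
  obtain ⟨B, hB, g1, g2, g3⟩ := hw
  rcases h3 with ⟨h3, rfl⟩ | ⟨h3, rfl⟩ <;> rcases g3 with ⟨g3, rfl⟩ | ⟨g3, rfl⟩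
  · omega
  · exact absurd (by omega) (key A B hA hB h1 g1 h2 g2 h3 g3)
  · exact absurd (by omega) (key B A hB hA g1 h1 g2 h2 g3 h3)
  · omega

theorem IsAlternating.trunc {n : ℕ} {A : Finset ℤ} (h : TkCons n A) (hA : IsAlternating A) (k : ℕ)
    (hk : k ≤ A.card) : ∃ B ⊆ A, IsAlternating B ∧ B.card = k := by
  obtain ⟨d, hd⟩ := Nat.exists_eq_add_of_le hk
  induction d generalizing A with
  | zero => exact ⟨A, subset_rfl, hA, hd⟩
  | succ d ih =>
    have hne : A.Nonempty := by rw [← Finset.card_pos]; omega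
    obtain ⟨x, hx, hm⟩ := tkMin hne
    have hcard := Finset.card_erase_of_mem hx
    obtain ⟨B, hB, h1, h2⟩ := ih (h.subset (A.erase_subset x)) (by
      intro a ha b hb hab hc
      refine hA a (Finset.mem_of_mem_erase ha) b (Finset.mem_of_mem_erase hb) hab ?_
      intro c hcA
      by_cases hcx : c = x
      · subst hcx
        have := hm a (Finset.mem_of_mem_erase ha)
        omega
      · exact hc c (Finset.mem_erase.2 ⟨hcx, hcA⟩)) (by omega) (by omega)
    exact ⟨B, hB.trans (A.erase_subset x), h1, h2⟩

theorem tkHas_of {n k : ℕ} {c : Finset ℤ → ℕ} {X : Finset ℤ} (hX : TkCons n X)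
    (h : k ≤ tkAltNum X) : ∃ v, TkHas k c X v := by
  obtain ⟨A, hA, h1, h2⟩ := tkAltNum_exists X
  obtain ⟨B, hB, g1, g2⟩ := h1.trunc (hX.subset hA) k (by omega)
  by_cases f : FirstPos B
  · exact ⟨_, B, hB.trans hA, g1, g2, Or.inl ⟨f, rfl⟩⟩
  · exact ⟨_, B, hB.trans hA, g1, g2, Or.inr ⟨f, rfl⟩⟩

theorem tkLamb_high {k : ℕ} {c : Finset ℤ → ℕ} {X : Finset ℤ} (h : ∃ v, TkHas k c X v) :
    ∃ v, TkHas k c X v ∧ (∀ w, TkHas k c X w → v ≤ w) ∧ tkLamb k c X = 2 * (k - 1) + v := by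
  classical
  refine ⟨Nat.find h, Nat.find_spec h, fun w hw => Nat.find_min' h hw, ?_⟩
  unfold tkLamb
  rw [dif_pos h]

theorem tkLamb_low {k : ℕ} {c : Finset ℤ → ℕ} {X : Finset ℤ} (h : ¬ ∃ v, TkHas k c X v) :
    (FirstPos X ∧ tkLamb k c X = 2 * (tkAltNum X - 1) + 1) ∨
    (¬ FirstPos X ∧ tkLamb k c X = 2 * (tkAltNum X - 1)) := by
  unfold tkLamb
  rw [dif_neg h]
  by_cases f : FirstPos X <;> simp [f]

theorem tkHas_neg_iff {n k : ℕ} (hk : 1 ≤ k) {c : Finset ℤ → ℕ} {X : Finset ℤ} (h : TkCons n X)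
    (v : ℕ) : TkHas k c (X.image (fun a => -a)) v ↔ TkHas k c X (tkNeg v) := by
  constructor
  · intro hv
    have := hv.neg hk h.neg
    rwa [tkNegImg_negImg] at this
  · intro hv
    have := hv.neg hk h
    have e : tkNeg (tkNeg v) = v := by unfold tkNeg; omega
    rwa [e] at this

theorem tkLab_tkLamb {n k : ℕ} (hk : 1 ≤ k) {c : Finset ℤ → ℕ} (hc : TkProper n k c) :
    TkLab n (tkLamb k c) := by
  constructor
  · intro X hne hX
    have hne' : (X.image (fun a => -a)).Nonempty := hne.image _
    by_cases h : ∃ v, TkHas k c X v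
    · have h' : ∃ v, TkHas k c (X.image (fun a => -a)) v := by
        obtain ⟨v, hv⟩ := h
        exact ⟨_, hv.neg hk hX⟩
      obtain ⟨v, v1, v2, v3⟩ := tkLamb_high h
      obtain ⟨w, w1, w2, w3⟩ := tkLamb_high h'
      rw [v3, w3]
      have a1 := w2 _ (v1.neg hk hX)
      have w1' := (tkHas_neg_iff hk hX w).1 w1
      have a2 := v2 _ w1'
      have a3 := TkHas.comp hk hc hX v1 w1'
      unfold tkNeg at *
      omega
    · have h' : ¬ ∃ v, TkHas k c (X.image (fun a => -a)) v := by
        rintro ⟨v, hv⟩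
        exact h ⟨_, (tkHas_neg_iff hk hX v).1 hv⟩
      have l1 := tkLamb_low h
      have l2 := tkLamb_low h'
      rw [tkFirst_neg hX hne, tkAltNum_neg hX] at l2
      unfold tkNeg
      rcases l1 with ⟨f, l1⟩ | ⟨f, l1⟩ <;> rcases l2 with ⟨g, l2⟩ | ⟨g, l2⟩
      · exact absurd f g
      · omega
      · omega
      · exact absurd f g
  · intro X Y hXY hne hY he
    have hX := hY.subset hXY
    have hneY := hne.mono hXY
    by_cases h : ∃ v, TkHas k c X v
    · obtain ⟨v, v1, v2, v3⟩ := tkLamb_high h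
      obtain ⟨w, w1, w2, w3⟩ := tkLamb_high (h.imp fun v hv => hv.mono hXY)
      rw [v3, w3] at he ⊢
      have := TkHas.comp hk hc hY (v1.mono hXY) w1 (by omega)
      omega
    · have l1 := tkLamb_low h
      have hlt : tkAltNum X < k := by
        by_contra hh
        exact h (tkHas_of hX (by omega))
      have p1 := tkAltNum_pos hne
      have p2 := tkAltNum_pos hneY
      by_cases h' : ∃ v, TkHas k c Y v
      · obtain ⟨w, w1, w2, w3⟩ := tkLamb_high h'
        omega
      · have l2 := tkLamb_low h'
        have := tkAltNum_first hXY hne hY (by omega)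
        rw [this] at l1
        by_cases f : FirstPos Y <;> simp only [f, true_and, false_and, not_true, not_false_iff, or_false, false_or] at l1 l2 <;> omega

theorem tk_lower {n k m : ℕ} (hk : 1 ≤ k) {c : Finset ℤ → ℕ} (hc : TkProper n k c)
    (hb : ∀ A, TkCons n A → A.card = k → IsAlternating A → FirstPos A → c A < m) :
    n ≤ k - 1 + m := by
  apply tucker_s17 (tkLab_tkLamb hk hc)
  intro X hne hX
  by_cases h : ∃ v, TkHas k c X v
  · obtain ⟨v, ⟨A, hA, h1, h2, h3⟩, v2, v3⟩ := tkLamb_high h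
    have hneA : A.Nonempty := by rw [← Finset.card_pos]; omega
    rcases h3 with ⟨h3, rfl⟩ | ⟨h3, rfl⟩
    · have := hb A (hX.subset hA) h2 h1 h3
      omega
    · have := hb _ (hX.subset hA).neg (by rw [tkNegImg_card, h2]) (h1.neg' (hX.subset hA))
        ((tkFirst_neg (hX.subset hA) hneA).2 h3)
      omega
  · have hlt : tkAltNum X < k := by
      by_contra hh
      exact h (tkHas_of hX (by omega))
    have := tkLamb_low h
    have p1 := tkAltNum_pos hne
    omega

theorem tk_lower' {n k m : ℕ} (hk : 1 ≤ k) (c : HSSVertex n k → Fin m)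
    (hc : ∀ A B : HSSVertex n k, (A ≠ B ∧ Disjoint A.1 B.1) → c A ≠ c B) : n ≤ k - 1 + m := by
  classical
  let c' : Finset ℤ → ℕ := fun A =>
    if h : IsSignedKSubset n k A ∧ IsAlternating A ∧ FirstPos A then (c ⟨A, h⟩).val else 0
  have e : ∀ A, TkCons n A → A.card = k → IsAlternating A → FirstPos A →
      ∃ h : IsSignedKSubset n k A ∧ IsAlternating A ∧ FirstPos A, c' A = (c ⟨A, h⟩).val := by
    intro A h1 h2 h3 h4
    have h : IsSignedKSubset n k A ∧ IsAlternating A ∧ FirstPos A := ⟨⟨h2, h1⟩, h3, h4⟩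
    exact ⟨h, dif_pos h⟩
  apply tk_lower hk (c := c')
  · intro A B a1 b1 a2 b2 a3 b3 a4 b4 he hd
    obtain ⟨h1, e1⟩ := e A a1 a2 a3 a4
    obtain ⟨h2, e2⟩ := e B b1 b2 b3 b4
    refine hc ⟨A, h1⟩ ⟨B, h2⟩ ⟨?_, hd⟩ (Fin.ext (by omega))
    intro h
    have : A = B := congrArg Subtype.val h
    subst this
    rw [disjoint_self, Finset.bot_eq_empty] at hd
    subst hd
    simp at a2
    omega
  · intro A a1 a2 a3 a4
    obtain ⟨h1, e1⟩ := e A a1 a2 a3 a4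
    rw [e1]
    exact (c ⟨A, h1⟩).isLt

theorem tk_upper {n k : ℕ} (hk : 1 ≤ k) : ∃ c : HKSVertex n k → Fin (n - k + 1),
    ∀ A B : HKSVertex n k, (A ≠ B ∧ Disjoint A.1 B.1) → c A ≠ c B := by
  have ex : ∀ A : HKSVertex n k, ∃ i : Fin (n - k + 1), ((i.val : ℤ) + 1) ∈ A.1 := by
    rintro ⟨A, ⟨hc, hA⟩, hf⟩
    have hne : A.Nonempty := by rw [← Finset.card_pos]; omega
    obtain ⟨a, ha, hm⟩ := tkMin hne
    have hpos := hf a ha hm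
    have hcard : A.card ≤ (Finset.Icc a.natAbs n).card := by
      apply Finset.card_le_card_of_injOn Int.natAbs
      · intro b hb
        have hb : b ∈ A := hb
        rw [Finset.coe_Icc, Set.mem_Icc]
        exact ⟨hm b hb, (hA.1 b hb).2⟩
      · intro x hx y hy hxy
        exact TkCons.eq (n := n) hA hx hy hxy
    rw [Nat.card_Icc] at hcard
    refine ⟨⟨a.natAbs - 1, by omega⟩, ?_⟩
    have : ((a.natAbs - 1 : ℕ) : ℤ) + 1 = a := by omega
    simpa only [this] using ha
  choose c hc using ex
  refine ⟨c, fun A B ⟨_, hd⟩ he => ?_⟩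
  have h1 := hc A
  rw [he] at h1
  exact Finset.disjoint_left.1 hd h1 (hc B)

/-- for all `n ≥ k ≥ 1`,
`χ(ŜK(n,k)⁻) = χ(ŜS(n,k)⁻) = n−k+1`, where `G⁻` is the graph on the same vertices whose
edges are the negative edges (pairs of disjoint sets). -/
theorem half_negative_subgraphs_chromatic (n k : ℕ) (hk : 1 ≤ k) (hkn : k ≤ n) :
    chromNum (fun A B : HKSVertex n k => A ≠ B ∧ Disjoint A.1 B.1) = n - k + 1 ∧
    chromNum (fun A B : HSSVertex n k => A ≠ B ∧ Disjoint A.1 B.1) = n - k + 1 := by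
  have up := tk_upper (n := n) hk
  have res : ∀ m, (∃ c : HKSVertex n k → Fin m,
      ∀ A B : HKSVertex n k, (A ≠ B ∧ Disjoint A.1 B.1) → c A ≠ c B) →
      ∃ c : HSSVertex n k → Fin m,
      ∀ A B : HSSVertex n k, (A ≠ B ∧ Disjoint A.1 B.1) → c A ≠ c B := by
    rintro m ⟨c, hc⟩
    refine ⟨fun A => c ⟨A.1, A.2.1, A.2.2.2⟩, ?_⟩
    rintro A B ⟨hne, hd⟩
    refine hc _ _ ⟨?_, hd⟩
    intro h
    exact hne (Subtype.ext (congrArg (fun x : HKSVertex n k => x.1) h))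
  have low : ∀ m, (∃ c : HSSVertex n k → Fin m,
      ∀ A B : HSSVertex n k, (A ≠ B ∧ Disjoint A.1 B.1) → c A ≠ c B) → n - k + 1 ≤ m := by
    rintro m ⟨c, hc⟩
    have := tk_lower' hk c hc
    omega
  unfold chromNum
  constructor
  · apply le_antisymm
    · exact Nat.sInf_le up
    · exact le_csInf ⟨_, up⟩ (fun m hm => low m (res m hm))
  · apply le_antisymm
    · exact Nat.sInf_le (res _ up)
    · exact le_csInf ⟨_, res _ up⟩ (fun m hm => low m hm)
end
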